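/- arXiv:2310.18960 — 7 statements merged into one kernel-verified Lean document; each statement's English description precedes it below -/
import Mathlib

section
/- Let f₁, f₂, f₃ be the standard basis vectors of ℝ³, let T₁ = conv{0, f₂, f₃}, T₂ = conv{0, f₁, f₃}, T₃ = conv{0, f₁, f₂}, and let P = T₁ + T₂ + T₃ (Minkowski sum). Then P is a half-zonotope but P is not a zonotope. -/
open scoped Pointwise BigOperators

noncomputable section

/-- Scalar product on `ℝ^d`. -/
def dotp {d : ℕ} (z x : Fin d → ℝ) : ℝ := ∑ i, z i * x i

/-- Number of vertices (extreme points) of a set. -/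
def nVert {d : ℕ} (S : Set (Fin d → ℝ)) : ℕ := (Set.extremePoints ℝ S).ncard

/-- `t⁻ = min {z·x : x ∈ P}`. -/
def tMin {d : ℕ} (P : Set (Fin d → ℝ)) (z : Fin d → ℝ) : ℝ := sInf (dotp z '' P)

/-- `t⁺ = max {z·x : x ∈ P}`. -/
def tMax {d : ℕ} (P : Set (Fin d → ℝ)) (z : Fin d → ℝ) : ℝ := sSup (dotp z '' P)

/-- `A(P,z)`: the average number of vertices of the sections `P ∩ {x : z·x = t}`
over `t ∈ [t⁻, t⁺]`. -/
def avgVert {d : ℕ} (P : Set (Fin d → ℝ)) (z : Fin d → ℝ) : ℝ :=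
  (tMax P z - tMin P z)⁻¹ *
    ∫ t in tMin P z..tMax P z, ((nVert (P ∩ {x | dotp z x = t}) : ℝ))

/-- A convex polytope: the convex hull of a finite point set. -/
def IsPolytope {d : ℕ} (P : Set (Fin d → ℝ)) : Prop :=
  ∃ s : Finset (Fin d → ℝ), P = convexHull ℝ (s : Set (Fin d → ℝ))

/-- The vectors are nonzero and pairwise linearly independent. -/
def PairwiseIndep {d n : ℕ} (a : Fin n → (Fin d → ℝ)) : Prop :=
  (∀ i, a i ≠ 0) ∧ ∀ i j, i ≠ j → ∀ c : ℝ, a j ≠ c • a i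

/-- A zonotope: a translate of a Minkowski sum of segments `[0, aᵢ]` with pairwise
linearly independent nonzero generators. -/
def IsZonotope {d : ℕ} (P : Set (Fin d → ℝ)) : Prop :=
  ∃ (n : ℕ) (a : Fin n → (Fin d → ℝ)) (x : Fin d → ℝ),
    PairwiseIndep a ∧ P = {x} + ∑ i, segment ℝ 0 (a i)

/-- Central symmetry: there is `c` with `2c - P = P`. -/
def CentSymm {d : ℕ} (P : Set (Fin d → ℝ)) : Prop :=
  ∃ c : Fin d → ℝ, (fun y => (2 : ℝ) • c - y) '' P = P

/-- An edge of the hypergraph `ℱ` on the generator set `V`: a subset `W ⊆ V` spanning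
a 2-dimensional subspace, maximal with this property. -/
def IsHEdge (V W : Finset (Fin 3 → ℝ)) : Prop :=
  W ⊆ V ∧ Module.finrank ℝ (Submodule.span ℝ (W : Set (Fin 3 → ℝ))) = 2 ∧
    ∀ v ∈ V, v ∉ W →
      Module.finrank ℝ (Submodule.span ℝ (insert v (W : Set (Fin 3 → ℝ)))) = 3

/-- The degree of `v` in the hypergraph `ℱ` on `V`: the number of edges containing `v`. -/
def degF (V : Finset (Fin 3 → ℝ)) (v : Fin 3 → ℝ) : ℕ :=
  {W : Finset (Fin 3 → ℝ) | IsHEdge V W ∧ v ∈ W}.ncard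

/-- The set of edges of the polytope `P` that are parallel to `v`: one-dimensional
exposed faces `[u,w]` of `P` with `w - u` a nonzero multiple of `v`. -/
def edgesParallel {d : ℕ} (P : Set (Fin d → ℝ)) (v : Fin d → ℝ) : Set (Set (Fin d → ℝ)) :=
  {e | ∃ u w : Fin d → ℝ, u ≠ w ∧ e = segment ℝ u w ∧
    (∃ y : Fin d → ℝ, y ≠ 0 ∧ e = {x ∈ P | ∀ p ∈ P, dotp y p ≤ dotp y x}) ∧
    ∃ c : ℝ, c ≠ 0 ∧ w - u = c • v}

lemma aux_mem_tri {d : ℕ} (a b x : Fin d → ℝ) :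
    x ∈ convexHull ℝ {0, a, b} ↔ ∃ s t : ℝ, 0 ≤ s ∧ 0 ≤ t ∧ s + t ≤ 1 ∧ x = s • a + t • b := by
  constructor
  · intro hx
    let C : Set (Fin d → ℝ) := {x | ∃ s t : ℝ, 0 ≤ s ∧ 0 ≤ t ∧ s + t ≤ 1 ∧ x = s • a + t • b}
    have hC : Convex ℝ C := by
      rintro x ⟨s, t, hs, ht, hst, rfl⟩ y ⟨s', t', hs', ht', hst', rfl⟩ p q hp hq hpq
      refine ⟨p * s + q * s', p * t + q * t', by positivity, by positivity, by nlinarith, ?_⟩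
      module
    refine convexHull_min ?_ hC hx
    rintro y (rfl | rfl | rfl)
    · exact ⟨0, 0, by norm_num, by norm_num, by norm_num, by simp⟩
    · exact ⟨1, 0, by norm_num, by norm_num, by norm_num, by simp⟩
    · exact ⟨0, 1, by norm_num, by norm_num, by norm_num, by simp⟩
  · rintro ⟨s, t, hs, ht, hst, rfl⟩
    have hc := convex_convexHull ℝ ({0, a, b} : Set (Fin d → ℝ))
    have := hc.sum_mem (t := Finset.univ) (w := ![1 - s - t, s, t]) (z := ![0, a, b])
      (by intro i _; fin_cases i <;> simp <;> linarith)
      (by simp [Fin.sum_univ_three]; try ring)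
      (by intro i _; apply subset_convexHull; fin_cases i <;> simp)
    simpa [Fin.sum_univ_three] using this

lemma aux_mem_seg {d : ℕ} (a x : Fin d → ℝ) :
    x ∈ segment ℝ 0 a ↔ ∃ u : ℝ, 0 ≤ u ∧ u ≤ 1 ∧ x = u • a := by
  rw [segment_eq_image]
  simp only [Set.mem_image, Set.mem_Icc, smul_zero, zero_add]
  constructor
  · rintro ⟨u, ⟨h, h'⟩, rfl⟩
    exact ⟨u, h, h', rfl⟩
  · rintro ⟨u, h, h', rfl⟩
    exact ⟨u, ⟨h, h'⟩, rfl⟩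

lemma aux_hex {d : ℕ} (a b : Fin d → ℝ) :
    convexHull ℝ {0, a, b} - convexHull ℝ {0, a, b} =
      {-a} + (segment ℝ 0 a + segment ℝ 0 b + segment ℝ 0 (a - b)) := by
  ext x
  simp only [Set.mem_sub, Set.mem_add, Set.mem_singleton_iff, aux_mem_tri, aux_mem_seg]
  constructor
  · rintro ⟨_, ⟨s, t, hs, ht, hst, rfl⟩, _, ⟨s', t', hs', ht', hst', rfl⟩, rfl⟩
    obtain ⟨w, h0, hp, hq, h1, h2, h3⟩ : ∃ w : ℝ, 0 ≤ w ∧ s - s' ≤ w ∧ t' - t ≤ w ∧ w ≤ 1 ∧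
        w ≤ 1 + s - s' ∧ w ≤ 1 - t + t' := by
      refine ⟨max 0 (max (s - s') (t' - t)), by simp, by simp, by simp, ?_, ?_, ?_⟩ <;>
      refine max_le ?_ (max_le ?_ ?_) <;> linarith
    refine ⟨_, rfl, _, ⟨_, ⟨1 + s - s' - w, by linarith, by linarith, rfl⟩, _,
      ⟨t - t' + w, by linarith, by linarith, rfl⟩, rfl⟩ |> fun h => ⟨_, h, _, ⟨w, h0, h1, rfl⟩, rfl⟩, ?_⟩
    module
  · rintro ⟨_, rfl, _, ⟨_, ⟨_, ⟨u, hu, hu', rfl⟩, _, ⟨v, hv, hv', rfl⟩, rfl⟩, _,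
      ⟨w, hw, hw', rfl⟩, rfl⟩, rfl⟩
    refine ⟨_, ⟨max (u + w - 1) 0, max (v - w) 0, by simp, by simp, ?_, rfl⟩, _,
      ⟨max (u + w - 1) 0 - (u + w - 1), max (v - w) 0 - (v - w), by simp, by simp, ?_, rfl⟩, ?_⟩
    · rcases max_cases (u + w - 1) 0 with h | h <;> rcases max_cases (v - w) 0 with h' | h' <;>
        linarith
    · rcases max_cases (u + w - 1) 0 with h | h <;> rcases max_cases (v - w) 0 with h' | h' <;>
        linarith
    · module

lemma aux_seg_two {d : ℕ} (a : Fin d → ℝ) :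
    segment ℝ 0 ((2 : ℝ) • a) = segment ℝ 0 a + segment ℝ 0 a := by
  ext x
  simp only [Set.mem_add, aux_mem_seg]
  constructor
  · rintro ⟨u, h, h', rfl⟩
    exact ⟨_, ⟨u, h, h', rfl⟩, _, ⟨u, h, h', rfl⟩, by module⟩
  · rintro ⟨_, ⟨u, h, h', rfl⟩, _, ⟨v, hv, hv', rfl⟩, rfl⟩
    exact ⟨(u + v) / 2, by linarith, by linarith, by module⟩

lemma aux_symm {d : ℕ} (P : Set (Fin d → ℝ)) (h : IsZonotope P) :
    ∃ s : Fin d → ℝ, ∀ p ∈ P, s - p ∈ P := by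
  obtain ⟨n, a, x, -, rfl⟩ := h
  refine ⟨x + x + ∑ i, a i, ?_⟩
  rintro _ ⟨x', hx', y, hy, rfl⟩
  rw [Set.mem_singleton_iff] at hx'
  subst hx'
  refine ⟨x', rfl, ∑ i, a i - y, ?_, by simp only; abel⟩
  rw [Set.mem_finsetSum] at hy ⊢
  obtain ⟨g, hg, rfl⟩ := hy
  refine ⟨fun i => a i - g i, ?_, by simp⟩
  intro i hi
  have := hg hi
  rw [aux_mem_seg] at this ⊢
  obtain ⟨u, h, h', e⟩ := this
  exact ⟨1 - u, by linarith, by linarith, by simp only [e]; module⟩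

/-- Example 5.3. For the standard basis vectors `f₁, f₂, f₃` of `ℝ³`,
the triangles `T₁ = conv{0,f₂,f₃}`, `T₂ = conv{0,f₁,f₃}`, `T₃ = conv{0,f₁,f₂}` and
`P = T₁ + T₂ + T₃`, the polytope `P` is a half-zonotope but not a zonotope. -/
theorem triangleSum_halfZonotope_not_zonotope (f : Fin 3 → (Fin 3 → ℝ))
    (hf : ∀ i, f i = fun j => if j = i then 1 else 0)
    (P : Set (Fin 3 → ℝ))
    (hP : P = convexHull ℝ {0, f 1, f 2} + convexHull ℝ {0, f 0, f 2} +
      convexHull ℝ {0, f 0, f 1}) :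
    IsZonotope (P - P) ∧ ¬ IsZonotope P := by
  constructor
  · refine ⟨6, ![(2 : ℝ) • f 0, (2 : ℝ) • f 1, (2 : ℝ) • f 2, f 1 - f 2, f 0 - f 2, f 0 - f 1],
      -f 1 + -f 0 + -f 0, ⟨?_, ?_⟩, ?_⟩
    · intro i h
      have h0 := congrFun h 0
      have h1 := congrFun h 1
      have h2 := congrFun h 2
      clear h
      fin_cases i <;> simp [hf] at h0 h1 h2
    · intro i j hij c h
      have h0 := congrFun h 0
      have h1 := congrFun h 1
      have h2 := congrFun h 2
      clear h
      fin_cases i <;> fin_cases j <;> first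
        | exact hij rfl
        | (simp [hf] at h0 h1 h2 <;> linarith)
    · rw [hP, add_sub_add_comm, add_sub_add_comm, aux_hex, aux_hex, aux_hex]
      simp only [Fin.sum_univ_six, ← Set.singleton_add_singleton]
      simp only [Matrix.cons_val, aux_seg_two]
      abel
  · intro hz
    obtain ⟨s, hs⟩ := aux_symm P hz
    have key : ∀ x ∈ P, 0 ≤ x 0 ∧ 0 ≤ x 1 ∧ 0 ≤ x 2 ∧ x 0 + x 1 + x 2 ≤ 3 := by
      intro x hx
      rw [hP] at hx
      simp only [Set.mem_add, aux_mem_tri] at hx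
      obtain ⟨_, ⟨_, ⟨a, b, ha, hb, hab, rfl⟩, _, ⟨a', b', ha', hb', hab', rfl⟩, rfl⟩,
        _, ⟨a'', b'', ha'', hb'', hab'', rfl⟩, rfl⟩ := hx
      simp [hf]
      refine ⟨?_, ?_, ?_, ?_⟩ <;> linarith
    have hull : ∀ a b : Fin 3 → ℝ, (0 ∈ convexHull ℝ {0, a, b}) ∧ (a ∈ convexHull ℝ {0, a, b}) ∧
        (b ∈ convexHull ℝ {0, a, b}) := fun a b =>
      ⟨subset_convexHull _ _ (by simp), subset_convexHull _ _ (by simp),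
        subset_convexHull _ _ (by simp)⟩
    have m : ∀ x y z, x ∈ convexHull ℝ {0, f 1, f 2} → y ∈ convexHull ℝ {0, f 0, f 2} →
        z ∈ convexHull ℝ {0, f 0, f 1} → x + y + z ∈ P := by
      intro x y z hx hy hz
      rw [hP]
      exact Set.add_mem_add (Set.add_mem_add hx hy) hz
    have k := key _ (hs _ (m 0 0 0 (hull _ _).1 (hull _ _).1 (hull _ _).1))
    have k0 := key _ (hs _ (m 0 (f 0) (f 0) (hull _ _).1 (hull _ _).2.1 (hull _ _).2.1))
    have k1 := key _ (hs _ (m (f 1) 0 (f 1) (hull _ _).2.1 (hull _ _).1 (hull _ _).2.2))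
    have k2 := key _ (hs _ (m (f 2) (f 2) 0 (hull _ _).2.2 (hull _ _).2.2 (hull _ _).1))
    simp [hf] at k k0 k1 k2
    linarith [k.2.2.2, k0.1, k1.2.1, k2.2.2.1]
end
end

section
/- Let T₁ = conv{a₁, a₂, a₃} and T₂ = conv{b₁, b₂, b₃} be nondegenerate triangles in ℝ³ (each vertex triple affinely independent) such that the 2-dimensional direction subspaces of their affine hulls are distinct. Then the Minkowski sum T₁ + T₂ is a half-zonotope but is not a zonotope. -/
open scoped Pointwise BigOperators

noncomputable section

lemma zon_add_seg {d : ℕ} (Z : Set (Fin d → ℝ)) (hZ : IsZonotope Z) (v : Fin d → ℝ) :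
    IsZonotope (Z + segment ℝ 0 v) := by
  obtain ⟨n, a, x, ⟨h0, hp⟩, rfl⟩ := hZ
  by_cases hv : v = 0
  · subst hv
    refine ⟨n, a, x, ⟨h0, hp⟩, ?_⟩
    simp
  by_cases hpar : ∃ i, ∃ c : ℝ, v = c • a i
  · obtain ⟨i, c, rfl⟩ := hpar
    have key : ∃ (t : Fin d → ℝ) (k : ℝ), k ≠ 0 ∧
        segment ℝ 0 (a i) + segment ℝ 0 (c • a i) = {t} + segment ℝ 0 (k • a i) := by
      have hs : ∀ k : ℝ, ∀ p : Fin d → ℝ, p ∈ segment ℝ 0 (k • a i) ↔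
          ∃ s : ℝ, 0 ≤ s ∧ s ≤ 1 ∧ p = (s * k) • a i := by
        intro k p
        rw [segment_eq_image]
        constructor
        · rintro ⟨s, ⟨h1, h2⟩, rfl⟩
          exact ⟨s, h1, h2, by simp [smul_smul]⟩
        · rintro ⟨s, h1, h2, rfl⟩
          exact ⟨s, ⟨h1, h2⟩, by simp [smul_smul]⟩
      have hs1 : segment ℝ 0 (a i) = segment ℝ 0 ((1:ℝ) • a i) := by simp
      rcases le_total 0 c with hc | hc
      · refine ⟨0, 1 + c, by positivity, ?_⟩
        rw [hs1]
        ext p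
        simp only [Set.mem_add, hs, Set.mem_singleton_iff]
        constructor
        · rintro ⟨_, ⟨s, h1, h2, rfl⟩, _, ⟨r, h3, h4, rfl⟩, rfl⟩
          refine ⟨0, rfl, _, ⟨(s + r * c) / (1 + c), by positivity, ?_, rfl⟩, ?_⟩
          · rw [div_le_one (by positivity)]; nlinarith
          · rw [div_mul_cancel₀ _ (by positivity)]; module
        · rintro ⟨_, rfl, _, ⟨s, h1, h2, rfl⟩, rfl⟩
          exact ⟨_, ⟨s, h1, h2, rfl⟩, _, ⟨s, h1, h2, rfl⟩, by module⟩
      · have hpos : (0:ℝ) < 1 - c := by linarith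
        refine ⟨c • a i, 1 - c, hpos.ne', ?_⟩
        rw [hs1]
        ext p
        simp only [Set.mem_add, hs, Set.mem_singleton_iff]
        constructor
        · rintro ⟨_, ⟨s, h1, h2, rfl⟩, _, ⟨r, h3, h4, rfl⟩, rfl⟩
          refine ⟨_, rfl, _, ⟨(s + r * c - c) / (1 - c), div_nonneg (by nlinarith) hpos.le, ?_, rfl⟩, ?_⟩
          · rw [div_le_one hpos]; nlinarith
          · rw [div_mul_cancel₀ _ hpos.ne']; module
        · rintro ⟨_, rfl, _, ⟨s, h1, h2, rfl⟩, rfl⟩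
          exact ⟨_, ⟨s, h1, h2, rfl⟩, _, ⟨1 - s, by linarith, by linarith, rfl⟩, by module⟩
    obtain ⟨t, k, hk, hkey⟩ := key
    refine ⟨n, Function.update a i (k • a i), x + t, ⟨?_, ?_⟩, ?_⟩
    · intro j
      by_cases hj : j = i
      · subst hj; simp [hk, h0]
      · simp [hj, h0]
    · intro j l hjl e
      by_cases hj : j = i
      · subst hj
        rw [Function.update_self, Function.update_of_ne (Ne.symm hjl), smul_smul]
        exact hp _ _ hjl _
      · rw [Function.update_of_ne hj]
        by_cases hl : l = i
        · subst hl
          rw [Function.update_self]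
          intro h
          apply hp _ _ hjl (k⁻¹ * e)
          rw [← smul_smul, ← h, smul_smul, inv_mul_cancel₀ hk, one_smul]
        · rw [Function.update_of_ne hl]; exact hp _ _ hjl _
    · have e1 : ∑ j, segment ℝ 0 (Function.update a i (k • a i) j) =
          segment ℝ 0 (k • a i) + ∑ j ∈ Finset.univ.erase i, segment ℝ 0 (a j) := by
        rw [← Finset.add_sum_erase _ _ (Finset.mem_univ i), Function.update_self]
        congr 1
        apply Finset.sum_congr rfl
        intro j hj
        rw [Function.update_of_ne (Finset.ne_of_mem_erase hj)]
      rw [e1, ← Finset.add_sum_erase _ _ (Finset.mem_univ i), ← Set.singleton_add_singleton]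
      have ac : ∀ X T A B K R : Set (Fin d → ℝ), A + B = T + K →
          X + (A + R) + B = X + T + (K + R) := by
        intro X T A B K R h
        calc X + (A + R) + B = X + (A + B) + R := by abel
          _ = X + T + (K + R) := by rw [h]; abel
      exact ac _ _ _ _ _ _ hkey
  · push Not at hpar
    refine ⟨n + 1, Fin.cons v a, x, ⟨?_, ?_⟩, ?_⟩
    · intro i
      refine Fin.cases ?_ ?_ i
      · simpa using hv
      · intro j; simpa using h0 j
    · intro i
      refine Fin.cases ?_ ?_ i
      · intro j
        refine Fin.cases ?_ ?_ j
        · intro h; exact absurd rfl h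
        · intro j _ c
          simp only [Fin.cons_zero, Fin.cons_succ]
          intro h
          have hc : c ≠ 0 := by rintro rfl; apply h0 j; simpa using h
          apply hpar j c⁻¹
          rw [h, smul_smul, inv_mul_cancel₀ hc, one_smul]
      · intro i j
        refine Fin.cases ?_ ?_ j
        · intro _ c
          simpa using hpar i c
        · intro j hij c
          simp only [Fin.cons_succ]
          exact hp i j (fun h => hij (by rw [h])) c
    · rw [Fin.sum_univ_succ]
      simp only [Fin.cons_zero, Fin.cons_succ]
      abel

lemma tri_sub {d : ℕ} (a₁ a₂ a₃ : Fin d → ℝ) :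
    convexHull ℝ {a₁, a₂, a₃} - convexHull ℝ {a₁, a₂, a₃} =
      segment ℝ 0 (a₂ - a₁) + segment ℝ 0 (a₃ - a₂) + segment ℝ 0 (a₁ - a₃) := by
  simp only [← convexHull_pair, ← convexHull_add, ← convexHull_sub]
  congr 1
  ext p
  simp only [Set.mem_add, Set.mem_sub, Set.mem_insert_iff, Set.mem_singleton_iff]
  constructor
  · have h0 : ∀ q : Fin d → ℝ, q = 0 ∨ q = 0 → q = 0 := by tauto
    rintro ⟨x, rfl | rfl | rfl, y, rfl | rfl | rfl, rfl⟩
    · exact ⟨_, ⟨0, Or.inl rfl, 0, Or.inl rfl, rfl⟩, 0, Or.inl rfl, by simp⟩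
    · exact ⟨_, ⟨0, Or.inl rfl, _, Or.inr rfl, rfl⟩, _, Or.inr rfl, by abel⟩
    · exact ⟨_, ⟨0, Or.inl rfl, 0, Or.inl rfl, rfl⟩, _, Or.inr rfl, by abel⟩
    · exact ⟨_, ⟨_, Or.inr rfl, 0, Or.inl rfl, rfl⟩, 0, Or.inl rfl, by abel⟩
    · exact ⟨_, ⟨0, Or.inl rfl, 0, Or.inl rfl, rfl⟩, 0, Or.inl rfl, by simp⟩
    · exact ⟨_, ⟨_, Or.inr rfl, 0, Or.inl rfl, rfl⟩, _, Or.inr rfl, by abel⟩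
    · exact ⟨_, ⟨_, Or.inr rfl, _, Or.inr rfl, rfl⟩, 0, Or.inl rfl, by abel⟩
    · exact ⟨_, ⟨0, Or.inl rfl, _, Or.inr rfl, rfl⟩, 0, Or.inl rfl, by abel⟩
    · exact ⟨_, ⟨0, Or.inl rfl, 0, Or.inl rfl, rfl⟩, 0, Or.inl rfl, by simp⟩
  · rintro ⟨_, ⟨_, rfl | rfl, _, rfl | rfl, rfl⟩, _, rfl | rfl, rfl⟩
    · exact ⟨a₁, by simp, a₁, by simp, by abel⟩
    · exact ⟨a₁, by simp, a₃, by simp, by abel⟩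
    · exact ⟨a₃, by simp, a₂, by simp, by abel⟩
    · exact ⟨a₁, by simp, a₂, by simp, by abel⟩
    · exact ⟨a₂, by simp, a₁, by simp, by abel⟩
    · exact ⟨a₂, by simp, a₃, by simp, by abel⟩
    · exact ⟨a₃, by simp, a₁, by simp, by abel⟩
    · exact ⟨a₁, by simp, a₁, by simp, by abel⟩

lemma zon_symm {d : ℕ} (Z : Set (Fin d → ℝ)) (hZ : IsZonotope Z) :
    ∃ C : Fin d → ℝ, ∀ p ∈ Z, C - p ∈ Z := by
  obtain ⟨n, a, x, -, rfl⟩ := hZ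
  have key : ∀ s : Finset (Fin n), ∀ p ∈ ∑ i ∈ s, segment ℝ 0 (a i),
      ∑ i ∈ s, a i - p ∈ ∑ i ∈ s, segment ℝ 0 (a i) := by
    intro s
    induction s using Finset.induction_on with
    | empty => simp
    | insert i s hi ih =>
      rw [Finset.sum_insert hi, Finset.sum_insert hi]
      rintro _ ⟨u, hu, v, hv, rfl⟩
      refine ⟨a i - u, ?_, _, ih v hv, by simp only []; abel⟩
      obtain ⟨α, β, h1, h2, h3, rfl⟩ := hu
      refine ⟨β, α, h2, h1, by linarith, ?_⟩
      have : α = 1 - β := by linarith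
      subst this
      module
  refine ⟨x + x + ∑ i, a i, ?_⟩
  rintro _ ⟨x', hx, v, hv, rfl⟩
  rw [Set.mem_singleton_iff] at hx
  subst hx
  exact ⟨x', rfl, _, key _ v hv, by simp only []; abel⟩

def mxx (x y z : ℝ) : ℝ := max x (max y z)
def mnn (x y z : ℝ) : ℝ := min x (min y z)
def mm (x y z : ℝ) : ℝ := mxx x y z + mnn x y z

lemma mm_sorted {x y z : ℝ} (h : x ≤ y) (h' : y ≤ z) : mm x y z = x + z := by
  unfold mm mxx mnn
  rw [max_eq_right h', min_eq_left h', max_eq_right (h.trans h'), min_eq_left h, add_comm]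

lemma mm_swap12 (x y z : ℝ) : mm x y z = mm y x z := by
  unfold mm mxx mnn
  rw [max_left_comm, min_left_comm]

lemma mm_swap23 (x y z : ℝ) : mm x y z = mm x z y := by
  unfold mm mxx mnn
  rw [max_comm y z, min_comm y z]

lemma mm_neg (x y z : ℝ) : mm (-x) (-y) (-z) = - mm x y z := by
  unfold mm mxx mnn
  rw [max_neg_neg, max_neg_neg, min_neg_neg, min_neg_neg]; ring

lemma mm_add (t x y z : ℝ) : mm (t + x) (t + y) (t + z) = 2 * t + mm x y z := by
  unfold mm mxx mnn
  rw [max_add_add_left, max_add_add_left, min_add_add_left, min_add_add_left]; ring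

lemma tri_le {d : ℕ} (u : (Fin d → ℝ) →ₗ[ℝ] ℝ) (a₁ a₂ a₃ : Fin d → ℝ) :
    (∀ p ∈ convexHull ℝ {a₁, a₂, a₃}, u p ≤ mxx (u a₁) (u a₂) (u a₃)) ∧
    (∃ p ∈ convexHull ℝ {a₁, a₂, a₃}, u p = mxx (u a₁) (u a₂) (u a₃)) := by
  constructor
  · intro p hp
    have hc : Convex ℝ {q | u q ≤ mxx (u a₁) (u a₂) (u a₃)} :=
      convex_halfSpace_le u.isLinear _
    have : convexHull ℝ {a₁, a₂, a₃} ⊆ {q | u q ≤ mxx (u a₁) (u a₂) (u a₃)} := by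
      apply convexHull_min _ hc
      rintro q (rfl | rfl | rfl) <;> simp [mxx]
    exact this hp
  · unfold mxx
    rcases max_choice (u a₁) (max (u a₂) (u a₃)) with h | h <;> rw [h]
    · exact ⟨a₁, subset_convexHull _ _ (by simp), rfl⟩
    · rcases max_choice (u a₂) (u a₃) with h | h <;> rw [h]
      · exact ⟨a₂, subset_convexHull _ _ (by simp), rfl⟩
      · exact ⟨a₃, subset_convexHull _ _ (by simp), rfl⟩

lemma mxx_neg (x y z : ℝ) : mxx (-x) (-y) (-z) = - mnn x y z := by
  unfold mxx mnn
  rw [max_neg_neg, max_neg_neg]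

lemma supp_symm {d : ℕ} (a₁ a₂ a₃ b₁ b₂ b₃ C : Fin d → ℝ)
    (hC : ∀ p ∈ convexHull ℝ {a₁, a₂, a₃} + convexHull ℝ {b₁, b₂, b₃},
      C - p ∈ convexHull ℝ {a₁, a₂, a₃} + convexHull ℝ {b₁, b₂, b₃})
    (u : (Fin d → ℝ) →ₗ[ℝ] ℝ) :
    mm (u a₁) (u a₂) (u a₃) + mm (u b₁) (u b₂) (u b₃) = u C := by
  have half : ∀ u : (Fin d → ℝ) →ₗ[ℝ] ℝ,
      mxx (u a₁) (u a₂) (u a₃) + mxx (u b₁) (u b₂) (u b₃) +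
      (mnn (u a₁) (u a₂) (u a₃) + mnn (u b₁) (u b₂) (u b₃)) ≤ u C := by
    intro u
    obtain ⟨p, hp, hpe⟩ := (tri_le u a₁ a₂ a₃).2
    obtain ⟨q, hq, hqe⟩ := (tri_le u b₁ b₂ b₃).2
    obtain ⟨p', hp', q', hq', h⟩ := hC _ (Set.add_mem_add hp hq)
    have h1 := (tri_le (-u) a₁ a₂ a₃).1 p' hp'
    have h2 := (tri_le (-u) b₁ b₂ b₃).1 q' hq'
    simp only [LinearMap.neg_apply, mxx_neg] at h1 h2
    have := congrArg u h
    simp only [map_add, map_sub] at this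
    linarith
  have h1 := half u
  have h2 := half (-u)
  have e : ∀ x y z : ℝ, mnn (-x) (-y) (-z) = - mxx x y z := by
    intro x y z; unfold mxx mnn; rw [min_neg_neg, min_neg_neg]
  simp only [LinearMap.neg_apply, mxx_neg, e] at h2
  unfold mm
  linarith

lemma core1 {d : ℕ} (a₁ a₂ a₃ b₁ b₂ b₃ C : Fin d → ℝ)
    (H : ∀ u : (Fin d → ℝ) →ₗ[ℝ] ℝ,
      mm (u a₁) (u a₂) (u a₃) + mm (u b₁) (u b₂) (u b₃) = u C)
    (y w w₁ w₂ : (Fin d → ℝ) →ₗ[ℝ] ℝ)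
    (hy2 : y b₂ = y b₁) (hy3 : y b₃ = y b₁) (h12 : y a₁ < y a₂) (h23 : y a₂ ≤ y a₃)
    (hw : w a₂ < w a₃)
    (e1 : w₁ b₂ = w₁ b₁ + 1) (e2 : w₁ b₃ = w₁ b₁) (e3 : w₂ b₂ = w₂ b₁) (e4 : w₂ b₃ = w₂ b₁ + 1) :
    False := by
  have big : ∀ δ K : ℝ, 0 < δ → ∃ N₀ : ℝ, ∀ N ≥ N₀, K ≤ N * δ := by
    intro δ K hδ
    refine ⟨K / δ, fun N hN => ?_⟩
    rwa [ge_iff_le, div_le_iff₀ hδ] at hN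
  have hB : ∀ (N : ℝ) (v : (Fin d → ℝ) →ₗ[ℝ] ℝ),
      mm ((N • y + v) b₁) ((N • y + v) b₂) ((N • y + v) b₃) =
        2 * (N * y b₁) + mm (v b₁) (v b₂) (v b₃) := by
    intro N v
    simp only [LinearMap.add_apply, LinearMap.smul_apply, smul_eq_mul, hy2, hy3, mm_add]
  rcases h23.lt_or_eq with h23 | h23
  · have hA : ∀ v : (Fin d → ℝ) →ₗ[ℝ] ℝ, ∃ N₀ : ℝ, ∀ N ≥ N₀,
        N * y a₁ + v a₁ + (N * y a₃ + v a₃) + (2 * (N * y b₁) + mm (v b₁) (v b₂) (v b₃))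
          = N * y C + v C := by
      intro v
      obtain ⟨N1, hN1⟩ := big (y a₂ - y a₁) (v a₁ - v a₂) (by linarith)
      obtain ⟨N2, hN2⟩ := big (y a₃ - y a₂) (v a₂ - v a₃) (by linarith)
      refine ⟨max N1 N2, fun N hN => ?_⟩
      have h1 := hN1 N (le_trans (le_max_left _ _) hN)
      have h2 := hN2 N (le_trans (le_max_right _ _) hN)
      have := H (N • y + v)
      rw [hB] at this
      simp only [LinearMap.add_apply, LinearMap.smul_apply, smul_eq_mul] at this
      rw [mm_sorted (by linarith) (by linarith)] at this
      exact this
    obtain ⟨N1, h1⟩ := hA w₁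
    obtain ⟨N2, h2⟩ := hA w₂
    obtain ⟨N3, h3⟩ := hA (w₁ + w₂)
    obtain ⟨N4, h4⟩ := hA 0
    set N := max (max N1 N2) (max N3 N4) with hN
    have h1 := h1 N (by simp [hN])
    have h2 := h2 N (by simp [hN])
    have h3 := h3 N (by simp [hN])
    have h4 := h4 N (by simp [hN])
    simp only [LinearMap.add_apply, LinearMap.zero_apply] at h3 h4
    rw [e1, e2, mm_swap23, mm_sorted le_rfl (by linarith)] at h1
    rw [e3, e4, mm_sorted le_rfl (by linarith)] at h2
    rw [e1, e2, e3, e4, mm_sorted (by linarith) (by linarith)] at h3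
    rw [mm_sorted le_rfl le_rfl] at h4
    linarith
  · obtain ⟨N1, hN1⟩ := big (y a₂ - y a₁) (w a₁ - w a₂) (by linarith)
    obtain ⟨N2, hN2⟩ := big (y a₂ - y a₁) (w a₃ - w a₁) (by linarith)
    set N := max N1 N2 with hN
    have h1 := hN1 N (by simp [hN])
    have h2 := hN2 N (by simp [hN])
    obtain ⟨N3, hN3⟩ : ∃ N3 : ℝ, N3 = N := ⟨_, rfl⟩
    have H0 := H (N • y + w)
    have H1 := H (N • y + (-w))
    have H2 := H (N • y + 0)
    rw [hB] at H0 H1 H2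
    simp only [LinearMap.add_apply, LinearMap.smul_apply, smul_eq_mul, LinearMap.neg_apply,
      LinearMap.zero_apply, mm_neg, ← h23] at H0 H1 H2
    rw [mm_sorted (by linarith) (by linarith)] at H0
    rw [mm_swap23, mm_sorted (by linarith) (by linarith)] at H1
    rw [mm_sorted (by linarith) (by linarith), mm_sorted le_rfl le_rfl] at H2
    linarith

lemma core2 {d : ℕ} (a₁ a₂ a₃ b₁ b₂ b₃ C : Fin d → ℝ)
    (H : ∀ u : (Fin d → ℝ) →ₗ[ℝ] ℝ,
      mm (u a₁) (u a₂) (u a₃) + mm (u b₁) (u b₂) (u b₃) = u C)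
    (h12 : a₁ ≠ a₂) (h23 : a₂ ≠ a₃)
    (y w₁ w₂ : (Fin d → ℝ) →ₗ[ℝ] ℝ)
    (hy2 : y b₂ = y b₁) (hy3 : y b₃ = y b₁) (hy12 : y a₁ ≤ y a₂) (hy23 : y a₂ ≤ y a₃)
    (hne : y a₁ ≠ y a₃)
    (e1 : w₁ b₂ = w₁ b₁ + 1) (e2 : w₁ b₃ = w₁ b₁) (e3 : w₂ b₂ = w₂ b₁) (e4 : w₂ b₃ = w₂ b₁ + 1) :
    False := by
  have sep : ∀ p q : Fin d → ℝ, p ≠ q → ∃ w : (Fin d → ℝ) →ₗ[ℝ] ℝ, w p < w q := by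
    intro p q hpq
    obtain ⟨i, hi⟩ := Function.ne_iff.mp hpq
    rcases lt_or_gt_of_ne hi with h | h
    · exact ⟨LinearMap.proj i, by simpa using h⟩
    · exact ⟨-LinearMap.proj i, by simpa using h⟩
  rcases hy12.lt_or_eq with h | h
  · obtain ⟨w, hw⟩ := sep _ _ h23
    exact core1 a₁ a₂ a₃ b₁ b₂ b₃ C H y w w₁ w₂ hy2 hy3 h hy23 hw e1 e2 e3 e4
  · obtain ⟨w, hw⟩ := sep _ _ h12.symm
    have hlt : y a₂ < y a₃ := lt_of_le_of_ne hy23 (h ▸ hne)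
    refine core1 a₃ a₂ a₁ b₁ b₂ b₃ C ?_ (-y) w w₁ w₂ (by simp [hy2]) (by simp [hy3])
      (by simpa using hlt) (by simp [h]) hw e1 e2 e3 e4
    intro u
    rw [mm_swap12, mm_swap23, mm_swap12]
    exact H u

/-- The Minkowski sum of two nondegenerate triangles in `ℝ³` lying in
planes with distinct direction subspaces is a half-zonotope but not a zonotope. -/
theorem triangle_sum_halfZonotope_not_zonotope (a₁ a₂ a₃ b₁ b₂ b₃ : Fin 3 → ℝ)
    (ha : AffineIndependent ℝ ![a₁, a₂, a₃])
    (hb : AffineIndependent ℝ ![b₁, b₂, b₃])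
    (hdir : (affineSpan ℝ ({a₁, a₂, a₃} : Set (Fin 3 → ℝ))).direction ≠
      (affineSpan ℝ ({b₁, b₂, b₃} : Set (Fin 3 → ℝ))).direction)
    (P : Set (Fin 3 → ℝ))
    (hP : P = convexHull ℝ {a₁, a₂, a₃} + convexHull ℝ {b₁, b₂, b₃}) :
    IsZonotope (P - P) ∧ ¬ IsZonotope P := by
  subst hP
  constructor
  · rw [add_sub_add_comm, tri_sub, tri_sub, ← add_assoc, ← add_assoc]
    apply zon_add_seg
    apply zon_add_seg
    apply zon_add_seg
    apply zon_add_seg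
    apply zon_add_seg
    have h0 : IsZonotope ({0} : Set (Fin 3 → ℝ)) :=
      ⟨0, Fin.elim0, 0, ⟨fun i => i.elim0, fun i => i.elim0⟩, by simp⟩
    simpa using zon_add_seg _ h0 (a₂ - a₁)
  · intro hz
    obtain ⟨C, hC⟩ := zon_symm _ hz
    have H := supp_symm a₁ a₂ a₃ b₁ b₂ b₃ C hC
    have n12 : a₁ ≠ a₂ := fun h => by simpa using ha.injective (a₁ := 0) (a₂ := 1) (by simpa using h)
    have n13 : a₁ ≠ a₃ := fun h => by simpa using ha.injective (a₁ := 0) (a₂ := 2) (by simpa using h)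
    have n23 : a₂ ≠ a₃ := fun h => by simpa using ha.injective (a₁ := 1) (a₂ := 2) (by simpa using h)
    have ra : ∀ c₁ c₂ c₃ : Fin 3 → ℝ, Set.range ![c₁, c₂, c₃] = {c₁, c₂, c₃} := by
      intro c₁ c₂ c₃
      ext q
      simp only [Set.mem_range, Fin.exists_fin_succ, Set.mem_insert_iff, Set.mem_singleton_iff]
      simp [eq_comm]
    have fa : Module.finrank ℝ (affineSpan ℝ ({a₁, a₂, a₃} : Set (Fin 3 → ℝ))).direction = 2 := by
      rw [direction_affineSpan, ← ra]
      exact ha.finrank_vectorSpan (by simp)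
    have fb : Module.finrank ℝ (affineSpan ℝ ({b₁, b₂, b₃} : Set (Fin 3 → ℝ))).direction = 2 := by
      rw [direction_affineSpan, ← ra]
      exact hb.finrank_vectorSpan (by simp)
    -- functional
    have hnle : ¬ (affineSpan ℝ ({a₁, a₂, a₃} : Set (Fin 3 → ℝ))).direction ≤
        (affineSpan ℝ ({b₁, b₂, b₃} : Set (Fin 3 → ℝ))).direction := fun h =>
      hdir (Submodule.eq_of_le_of_finrank_eq h (fa.trans fb.symm))
    obtain ⟨v, hva, hvb⟩ := SetLike.not_le_iff_exists.mp hnle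
    obtain ⟨y, hyv, hyle⟩ := Submodule.exists_le_ker_of_notMem hvb
    have hyb : ∀ p ∈ ({b₁, b₂, b₃} : Set (Fin 3 → ℝ)), y p = y b₁ := by
      intro p hp
      have : p - b₁ ∈ (affineSpan ℝ ({b₁, b₂, b₃} : Set (Fin 3 → ℝ))).direction := by
        rw [direction_affineSpan]
        exact vsub_mem_vectorSpan ℝ hp (by simp)
      have := hyle this
      rw [LinearMap.mem_ker, map_sub] at this
      linarith
    have hya : ¬ (y a₁ = y a₂ ∧ y a₂ = y a₃) := by
      rintro ⟨h1, h2⟩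
      apply hyv
      have : (affineSpan ℝ ({a₁, a₂, a₃} : Set (Fin 3 → ℝ))).direction ≤ LinearMap.ker y := by
        rw [direction_affineSpan, vectorSpan_eq_span_vsub_set_right ℝ (p := a₁) (by simp),
          Submodule.span_le]
        rintro _ ⟨q, (rfl | rfl | rfl), rfl⟩ <;> simp [h1, h2]
      exact this hva
    -- dual functionals
    have hli : LinearIndependent ℝ ![b₂ - b₁, b₃ - b₁] := by
      have h := (affineIndependent_iff_linearIndependent_vsub ℝ _ (0 : Fin 3)).mp hb
      have h' := h.comp (fun i : Fin 2 => ⟨i.succ, Fin.succ_ne_zero i⟩) (by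
        intro i j hij
        simpa using hij)
      have e : ![b₂ - b₁, b₃ - b₁] = ((fun i : {x : Fin 3 // x ≠ 0} =>
          ![b₁, b₂, b₃] (i : Fin 3) -ᵥ ![b₁, b₂, b₃] 0) ∘
          fun i : Fin 2 => ⟨i.succ, Fin.succ_ne_zero i⟩) := by
        ext i j
        fin_cases i <;> rfl
      rw [e]
      exact h'
    have dual : ∀ s t : ℝ, ∃ w : (Fin 3 → ℝ) →ₗ[ℝ] ℝ, w b₂ = w b₁ + s ∧ w b₃ = w b₁ + t := by
      intro s t
      obtain ⟨w, hw⟩ := LinearMap.exists_extend ((Module.Basis.span hli).constr ℝ ![s, t])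
      have key : ∀ i, w (![b₂ - b₁, b₃ - b₁] i) = ![s, t] i := by
        intro i
        have h1 := (Module.Basis.span hli).constr_basis ℝ ![s, t] i
        rw [← hw] at h1
        rw [← h1, LinearMap.comp_apply, Submodule.subtype_apply, Module.Basis.span_apply]
      refine ⟨w, ?_, ?_⟩
      · have := key 0
        simp at this
        linarith
      · have := key 1
        simp at this
        linarith
    obtain ⟨w₁, e1, e2⟩ := dual 1 0
    obtain ⟨w₂, e3, e4⟩ := dual 0 1
    rw [add_zero] at e2 e3
    have hy2 := hyb b₂ (by simp)
    have hy3 := hyb b₃ (by simp)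
    rcases le_total (y a₁) (y a₂) with h1 | h1 <;> rcases le_total (y a₂) (y a₃) with h2 | h2 <;>
      rcases le_total (y a₁) (y a₃) with h3 | h3
    · exact core2 a₁ a₂ a₃ b₁ b₂ b₃ C H n12 n23 y w₁ w₂ hy2 hy3 h1 h2
        (fun h => hya ⟨by linarith, by linarith⟩) e1 e2 e3 e4
    · exact core2 a₁ a₂ a₃ b₁ b₂ b₃ C H n12 n23 y w₁ w₂ hy2 hy3 h1 h2
        (fun h => hya ⟨by linarith, by linarith⟩) e1 e2 e3 e4
    · exact core2 a₁ a₃ a₂ b₁ b₂ b₃ C (fun u => by rw [mm_swap23]; exact H u) n13 n23.symm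
        y w₁ w₂ hy2 hy3 h3 h2 (fun h => hya ⟨by linarith, by linarith⟩) e1 e2 e3 e4
    · exact core2 a₃ a₁ a₂ b₁ b₂ b₃ C (fun u => by rw [mm_swap12, mm_swap23]; exact H u)
        n13.symm n12
        y w₁ w₂ hy2 hy3 h3 h1 (fun h => hya ⟨by linarith, by linarith⟩) e1 e2 e3 e4
    · exact core2 a₂ a₁ a₃ b₁ b₂ b₃ C (fun u => by rw [mm_swap12]; exact H u) n12.symm n13
        y w₁ w₂ hy2 hy3 h1 h3 (fun h => hya ⟨by linarith, by linarith⟩) e1 e2 e3 e4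
    · exact core2 a₂ a₃ a₁ b₁ b₂ b₃ C (fun u => by rw [mm_swap23, mm_swap12]; exact H u)
        n23 n13.symm
        y w₁ w₂ hy2 hy3 h2 h3 (fun h => hya ⟨by linarith, by linarith⟩) e1 e2 e3 e4
    · exact core2 a₃ a₂ a₁ b₁ b₂ b₃ C
        (fun u => by rw [mm_swap12, mm_swap23, mm_swap12]; exact H u) n23.symm n12.symm
        y w₁ w₂ hy2 hy3 h2 h1 (fun h => hya ⟨by linarith, by linarith⟩) e1 e2 e3 e4
    · exact core2 a₃ a₂ a₁ b₁ b₂ b₃ C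
        (fun u => by rw [mm_swap12, mm_swap23, mm_swap12]; exact H u) n23.symm n12.symm
        y w₁ w₂ hy2 hy3 h2 h1 (fun h => hya ⟨by linarith, by linarith⟩) e1 e2 e3 e4
end
end

section
/- Let L ⊂ ℝ³ be a two-dimensional affine plane containing no lattice point, i.e., L ∩ ℤ³ = ∅. For a ∈ ℤ³ let T(a) = L ∩ (a + [0,1]³), and for n ∈ ℕ let N_n = {a ∈ ℤ³ : T(a) ≠ ∅ and T(a) ⊆ [−n, n]³}. Then the average number of vertices of the tiles tends to 4: lim_{n→∞} ( ∑_{a ∈ N_n} (number of extreme points of T(a)) ) / |N_n| = 4. -/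
open scoped Pointwise BigOperators

noncomputable section

def GG (z : Fin 3 → ℝ) (c : ℝ) (x : Fin 3 → ℝ) : ℝ := z 0 * x 0 + z 1 * x 1 + z 2 * x 2 - c

def cst (p : Fin 3 → ℤ) : Fin 3 → ℝ := fun i => (p i : ℝ)

def XX (z : Fin 3 → ℝ) (c : ℝ) (i : Fin 3) (p : Fin 3 → ℤ) : Prop :=
  GG z c (cst p) * (GG z c (cst p) + z i) < 0

def DD (i : Fin 3) : Finset (Fin 3 → ℤ) :=
  Fintype.piFinset (fun j => if j = i then {0} else {0, 1})

def PP (z : Fin 3 → ℝ) (c : ℝ) (i : Fin 3) (p : Fin 3 → ℤ) : Fin 3 → ℝ :=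
  Function.update (cst p) i (p i - GG z c (cst p) / z i)

lemma GG_update (z : Fin 3 → ℝ) (c : ℝ) (x : Fin 3 → ℝ) (i : Fin 3) (t : ℝ) :
    GG z c (Function.update x i t) = GG z c x + z i * (t - x i) := by
  fin_cases i <;> simp [GG, Function.update] <;> ring

lemma GG_add (z : Fin 3 → ℝ) (c : ℝ) (x d : Fin 3 → ℝ) :
    GG z c (x + d) = GG z c x + GG z 0 d := by
  simp [GG]; ring

lemma cst_update (p : Fin 3 → ℤ) (i : Fin 3) (t : ℤ) :
    cst (Function.update p i t) = Function.update (cst p) i (t : ℝ) := by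
  funext j
  by_cases h : j = i
  · subst h; simp [cst]
  · simp [cst, h]

lemma mem_DD {i : Fin 3} {t : Fin 3 → ℤ} :
    t ∈ DD i ↔ t i = 0 ∧ ∀ j, j ≠ i → (t j = 0 ∨ t j = 1) := by
  simp only [DD, Fintype.mem_piFinset]
  constructor
  · intro h
    refine ⟨by simpa using h i, fun j hj => by simpa [hj] using h j⟩
  · rintro ⟨h1, h2⟩ j
    by_cases hj : j = i
    · subst hj; simpa using h1
    · simpa [hj] using h2 j hj

lemma card_DD (i : Fin 3) : (DD i).card = 4 := by
  fin_cases i <;> decide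

lemma XX_root {z : Fin 3 → ℝ} {c : ℝ} {i : Fin 3} {p : Fin 3 → ℤ} (h : XX z c i p) :
    z i ≠ 0 ∧ 0 < - GG z c (cst p) / z i ∧ - GG z c (cst p) / z i < 1 := by
  unfold XX at h
  generalize GG z c (cst p) = g at *
  have hz : z i ≠ 0 := by
    intro h0; rw [h0] at h; nlinarith [mul_self_nonneg g]
  refine ⟨hz, ?_⟩
  rcases lt_or_gt_of_ne hz with hz | hz
  · rw [lt_div_iff_of_neg hz, div_lt_iff_of_neg hz]
    constructor <;> nlinarith
  · rw [lt_div_iff₀ hz, div_lt_iff₀ hz]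
    constructor <;> nlinarith

lemma root_XX {z : Fin 3 → ℝ} {c : ℝ} {i : Fin 3} {p : Fin 3 → ℤ} (hz : z i ≠ 0)
    (h1 : 0 < - GG z c (cst p) / z i) (h2 : - GG z c (cst p) / z i < 1) : XX z c i p := by
  unfold XX
  generalize GG z c (cst p) = g at *
  have e : g = - (-g / z i) * z i := by field_simp
  generalize -g / z i = s at *
  rw [e]
  have : 0 < z i ^ 2 := by positivity
  nlinarith [mul_pos (mul_pos h1 (sub_pos.2 h2)) this]

lemma XX_unique {z : Fin 3 → ℝ} {c : ℝ} {i : Fin 3} {p q : Fin 3 → ℤ} (hp : XX z c i p)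
    (hq : XX z c i q) (h : ∀ j, j ≠ i → p j = q j) : p = q := by
  obtain ⟨hz, h1, h2⟩ := XX_root hp
  obtain ⟨-, h3, h4⟩ := XX_root hq
  have e : q = Function.update p i (q i) := by
    funext j
    by_cases hj : j = i
    · subst hj; simp
    · simp [hj, h j hj]
  have e2 : GG z c (cst q) = GG z c (cst p) + z i * (q i - p i) := by
    conv_lhs => rw [e, cst_update, GG_update]
    rfl
  have e3 : - GG z c (cst q) / z i = - GG z c (cst p) / z i - (q i - p i) := by
    rw [e2]; field_simp; ring
  rw [e3] at h3 h4
  have a1 : (q i : ℝ) < p i + 1 := by linarith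
  have a2 : (p i : ℝ) < q i + 1 := by linarith
  have a3 : q i < p i + 1 := by exact_mod_cast a1
  have a4 : p i < q i + 1 := by exact_mod_cast a2
  rw [e, show q i = p i by omega]; simp

/-- The tile. -/
def TT (z : Fin 3 → ℝ) (c : ℝ) (a : Fin 3 → ℤ) : Set (Fin 3 → ℝ) :=
  {x | GG z c x = 0 ∧ ∀ i, (a i : ℝ) ≤ x i ∧ x i ≤ (a i : ℝ) + 1}

/-- moving in a direction shows non-extremality -/
lemma not_ext {z : Fin 3 → ℝ} {c : ℝ} {a : Fin 3 → ℤ} {x d : Fin 3 → ℝ}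
    (hx : x ∈ (TT z c a).extremePoints ℝ) (hd : GG z 0 d = 0)
    (hd2 : ∀ i, d i ≠ 0 → (a i : ℝ) < x i ∧ x i < (a i : ℝ) + 1) : d = 0 := by
  obtain ⟨⟨hg, hb⟩, hext⟩ := hx
  have key : ∀ i, ∃ e > 0, ∀ s : ℝ, |s| ≤ e →
      (a i : ℝ) ≤ x i + s * d i ∧ x i + s * d i ≤ (a i : ℝ) + 1 := by
    intro i
    by_cases h0 : d i = 0
    · exact ⟨1, one_pos, fun s _ => by simpa [h0] using hb i⟩
    · obtain ⟨h1, h2⟩ := hd2 i h0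
      have hp : 0 < |d i| := abs_pos.2 h0
      refine ⟨min (x i - a i) (a i + 1 - x i) / |d i|, ?_, ?_⟩
      · apply div_pos _ hp
        apply lt_min <;> linarith
      · intro s hs
        rw [le_div_iff₀ hp, ← abs_mul] at hs
        have := abs_le.1 hs
        have m1 := min_le_left (x i - a i) (a i + 1 - x i)
        have m2 := min_le_right (x i - a i) (a i + 1 - x i)
        constructor <;> linarith
  choose e he hs using key
  let ε := min (e 0) (min (e 1) (e 2))
  have hε : 0 < ε := lt_min (he 0) (lt_min (he 1) (he 2))
  have hle : ∀ i, ε ≤ e i := by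
    intro i
    fin_cases i
    · exact min_le_left _ _
    · exact (min_le_right _ _).trans (min_le_left _ _)
    · exact (min_le_right _ _).trans (min_le_right _ _)
  have mem : ∀ s : ℝ, |s| ≤ ε → x + s • d ∈ TT z c a := by
    intro s h
    refine ⟨?_, fun i => ?_⟩
    · rw [GG_add, hg]
      have : GG z 0 (s • d) = s * GG z 0 d := by simp [GG]; ring
      rw [this, hd]; simp
    · simpa using hs i s (h.trans (hle i))
  have h1 := mem ε (by rw [abs_of_pos hε])
  have h2 := mem (-ε) (by rw [abs_neg, abs_of_pos hε])
  have := hext h1 h2 ⟨1/2, 1/2, by norm_num, by norm_num, by norm_num, by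
    funext i; simp; ring⟩
  funext i
  have := congrFun this i
  simp at this
  rcases this with h | h
  · exact absurd h hε.ne'
  · simpa using h

lemma PP_mem {z : Fin 3 → ℝ} {c : ℝ} {i : Fin 3} {a t : Fin 3 → ℤ} (ht : t ∈ DD i)
    (h : XX z c i (a + t)) : PP z c i (a + t) ∈ (TT z c a).extremePoints ℝ := by
  obtain ⟨hz, h1, h2⟩ := XX_root h
  obtain ⟨ht1, ht2⟩ := mem_DD.1 ht
  have hoff : ∀ j, j ≠ i → PP z c i (a + t) j = a j + t j := by
    intro j hj; simp [PP, hj, cst]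
  refine ⟨⟨?_, fun j => ?_⟩, ?_⟩
  · rw [PP, GG_update]; simp only [cst]; field_simp; ring
  · by_cases hj : j = i
    · subst hj
      simp only [PP, Function.update_self, Pi.add_apply, ht1]
      rw [neg_div] at h1 h2
      push_cast
      constructor <;> linarith
    · rw [hoff j hj]
      rcases ht2 j hj with h | h <;> simp [h]
  · intro y hy w hw hyw
    obtain ⟨s, r, hs, hr, hsr, e⟩ := hyw
    have hoffy : ∀ j, j ≠ i → y j = PP z c i (a + t) j := by
      intro j hj
      have ej := congrFun e j
      simp only [Pi.add_apply, Pi.smul_apply, smul_eq_mul] at ej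
      rw [hoff j hj] at ej ⊢
      have b1 := hy.2 j
      have b2 := hw.2 j
      obtain rfl : r = 1 - s := by linarith
      rcases ht2 j hj with h | h <;> rw [h] at ej ⊢ <;> push_cast at ej ⊢ <;> nlinarith
    have ey : y = Function.update (PP z c i (a + t)) i (y i) := by
      funext j
      by_cases hj : j = i
      · subst hj; simp
      · simp [hj, hoffy j hj]
    have g0 : GG z c (PP z c i (a + t)) = 0 := by
      rw [PP, GG_update]; simp only [cst]; field_simp; ring
    have g1 := hy.1
    rw [ey, GG_update, g0, zero_add] at g1
    have : y i = PP z c i (a + t) i := by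
      rcases mul_eq_zero.1 g1 with h | h
      · exact absurd h hz
      · linarith
    rw [ey, this]; simp

lemma ext_eq {z : Fin 3 → ℝ} {c : ℝ} (hlat : ∀ p, GG z c (cst p) ≠ 0) {a : Fin 3 → ℤ}
    {x : Fin 3 → ℝ} (hx : x ∈ (TT z c a).extremePoints ℝ) :
    ∃ i, ∃ t ∈ DD i, XX z c i (a + t) ∧ PP z c i (a + t) = x := by
  have hb := hx.1.2
  have hg := hx.1.1
  have two : ∀ i j, i ≠ j → ((a i : ℝ) < x i ∧ x i < (a i : ℝ) + 1) →
      ((a j : ℝ) < x j ∧ x j < (a j : ℝ) + 1) → False := by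
    intro i j hij hi hj
    by_cases hz : z i = 0
    · have := not_ext (d := Pi.single i 1) hx ?_ ?_
      · simpa using congrFun this i
      · fin_cases i <;> simp_all [GG]
      · intro k hk
        by_cases h : k = i
        · subst h; exact hi
        · simp [h] at hk
    · have := not_ext (d := Pi.single i (z j) - Pi.single j (z i)) hx ?_ ?_
      · have := congrFun this j
        simp [hij.symm] at this
        exact hz this
      · fin_cases i <;> fin_cases j <;> simp_all [GG] <;> ring
      · intro k hk
        by_cases h : k = i
        · subst h; exact hi
        · by_cases h' : k = j
          · subst h'; exact hj
          · simp [h, h'] at hk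
  have bd : ∀ i, ¬ ((a i : ℝ) < x i ∧ x i < (a i : ℝ) + 1) →
      ∃ s : ℤ, (s = 0 ∨ s = 1) ∧ x i = a i + s := by
    intro i hi
    rcases (hb i).1.eq_or_lt with h | h
    · exact ⟨0, Or.inl rfl, by simp [h]⟩
    · refine ⟨1, Or.inr rfl, ?_⟩
      push_cast
      exact le_antisymm (hb i).2 (not_lt.1 fun h' => hi ⟨h, h'⟩)
  have one : ∃ i, ((a i : ℝ) < x i ∧ x i < (a i : ℝ) + 1) := by
    by_contra! hno
    choose s hs1 hs2 using fun i => bd i (by push Not; exact hno i)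
    apply hlat (a + s)
    have : cst (a + s) = x := by funext i; simp [cst, hs2]
    rw [this, hg]
  obtain ⟨i, hi⟩ := one
  choose s hs1 hs2 using fun j : {j // j ≠ i} => bd j.1 (fun h => two i j.1 j.2.symm hi h)
  let t : Fin 3 → ℤ := fun j => if h : j = i then 0 else s ⟨j, h⟩
  have ti : t i = 0 := by simp [t]
  have ht : t ∈ DD i := by
    rw [mem_DD]
    refine ⟨ti, fun j hj => ?_⟩
    simpa [t, hj] using hs1 ⟨j, hj⟩
  have ex : x = Function.update (cst (a + t)) i (x i) := by
    funext j
    by_cases hj : j = i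
    · subst hj; simp
    · simp [hj, cst, t, hs2 ⟨j, hj⟩]
  have hg' := hg
  rw [ex, GG_update] at hg'
  have e1 : cst (a + t) i = a i := by simp [cst, ti]
  rw [e1] at hg'
  have hz : z i ≠ 0 := by
    intro h; rw [h] at hg'; exact hlat (a + t) (by linarith)
  have e2 : - GG z c (cst (a + t)) / z i = x i - a i := by
    rw [div_eq_iff hz]; linarith
  refine ⟨i, t, ht, root_XX hz (by rw [e2]; linarith) (by rw [e2]; linarith), ?_⟩
  rw [PP, ex]
  rw [neg_div] at e2
  congr 1
  simp only [Pi.add_apply, ti]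
  push_cast
  linarith

open Classical in
lemma nVert_TT {z : Fin 3 → ℝ} {c : ℝ} (hlat : ∀ p, GG z c (cst p) ≠ 0) (a : Fin 3 → ℤ) :
    nVert (TT z c a) = ∑ i, ∑ t ∈ DD i, if XX z c i (a + t) then 1 else 0 := by
  let S : Finset ((i : Fin 3) × (Fin 3 → ℤ)) :=
    Finset.univ.sigma (fun i => (DD i).filter (fun t => XX z c i (a + t)))
  have e : (TT z c a).extremePoints ℝ = ((S.image (fun q => PP z c q.1 (a + q.2)) :
      Finset (Fin 3 → ℝ)) : Set (Fin 3 → ℝ)) := by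
    ext x
    simp only [Finset.coe_image, Set.mem_image, Finset.mem_coe]
    constructor
    · intro hx
      obtain ⟨i, t, h1, h2, h3⟩ := ext_eq hlat hx
      exact ⟨⟨i, t⟩, by simp [S, h1, h2], h3⟩
    · rintro ⟨⟨i, t⟩, h, rfl⟩
      simp [S] at h
      exact PP_mem h.1 h.2
  rw [nVert, e, Set.ncard_coe_finset, Finset.card_image_of_injOn, Finset.card_sigma]
  · simp only [Finset.card_filter]
  · rintro ⟨i, t⟩ h ⟨j, u⟩ h' heq
    simp [S] at h h' heq
    obtain ⟨ht, hX⟩ := h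
    obtain ⟨hu, hY⟩ := h'
    have hij : i = j := by
      by_contra hij
      obtain ⟨hz, h1, h2⟩ := XX_root hX
      have := congrFun heq i
      simp only [PP, Function.update_self, Function.update_of_ne hij, cst] at this
      rw [neg_div] at h1 h2
      have f1 : ((a + t) i : ℝ) < ((a + u) i : ℤ) := by linarith
      have f2 : ((a + u) i : ℝ) < ((a + t) i : ℤ) + 1 := by linarith
      have f1' : (a + t) i < (a + u) i := by exact_mod_cast f1
      have f2' : (a + u) i < (a + t) i + 1 := by exact_mod_cast f2
      omega
    subst hij
    have : t = u := by
      funext j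
      by_cases hj : j = i
      · subst hj; rw [(mem_DD.1 ht).1, (mem_DD.1 hu).1]
      · have := congrFun heq j
        simpa [PP, hj, cst] using this
    rw [this]

def dl (z : Fin 3 → ℝ) : Fin 3 → ℤ := fun j => if z j < 0 then 1 else 0

def tau (z : Fin 3 → ℝ) (i : Fin 3) : Fin 3 → ℤ :=
  fun j => if j < i then 1 - dl z j else if j = i then 0 else dl z j

def KK (z : Fin 3 → ℝ) (c : ℝ) (a : Fin 3 → ℤ) : Prop :=
  GG z c (cst (a + dl z)) < 0 ∧ 0 < GG z c (cst (a + (1 - dl z)))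

lemma tau_mem (z : Fin 3 → ℝ) (i : Fin 3) : tau z i ∈ DD i := by
  rw [mem_DD]
  refine ⟨by simp [tau], fun j hj => ?_⟩
  simp only [tau, dl, hj]
  split_ifs <;> simp

lemma GG_cst_add (z : Fin 3 → ℝ) (c : ℝ) (a s : Fin 3 → ℤ) :
    GG z c (cst (a + s)) = GG z c (cst a) + z 0 * s 0 + z 1 * s 1 + z 2 * s 2 := by
  simp [GG, cst]; ring

lemma dl_cases (z : Fin 3 → ℝ) (j : Fin 3) :
    (z j * (dl z j : ℝ) = min (z j) 0) ∧ z j * ((1 - dl z j : ℤ) : ℝ) = max (z j) 0 := by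
  by_cases h : z j < 0
  · simp [dl, h, h.le]
  · simp [dl, h, not_lt.1 h]

lemma prod_aux (g z : ℝ) : (g + 0) * ((g + 0) + z) = (g + min z 0) * (g + max z 0) := by
  rcases le_total z 0 with h | h <;> simp [h] <;> ring

open Classical in
lemma path_count {z : Fin 3 → ℝ} {c : ℝ} (hlat : ∀ p, GG z c (cst p) ≠ 0) (a : Fin 3 → ℤ) :
    (if KK z c a then 1 else 0 : ℕ) = ∑ i, if XX z c i (a + tau z i) then 1 else 0 := by
  have m0 := dl_cases z 0
  have m1 := dl_cases z 1
  have m2 := dl_cases z 2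
  have n0 := hlat (a + ![dl z 0, dl z 1, dl z 2])
  have n1 := hlat (a + ![1 - dl z 0, dl z 1, dl z 2])
  have n2 := hlat (a + ![1 - dl z 0, 1 - dl z 1, dl z 2])
  have n3 := hlat (a + ![1 - dl z 0, 1 - dl z 1, 1 - dl z 2])
  have l0 : min (z 0) 0 ≤ max (z 0) 0 := min_le_max
  have l1 : min (z 1) 0 ≤ max (z 1) 0 := min_le_max
  have l2 : min (z 2) 0 ≤ max (z 2) 0 := min_le_max
  set A := GG z c (cst a) with hA
  have hK : KK z c a ↔ A + min (z 0) 0 + min (z 1) 0 + min (z 2) 0 < 0 ∧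
      0 < A + max (z 0) 0 + max (z 1) 0 + max (z 2) 0 := by
    simp only [KK, GG_cst_add, ← hA, Pi.sub_apply, Pi.one_apply, m0, m1, m2]
  have h0 : XX z c 0 (a + tau z 0) ↔ (A + min (z 0) 0 + min (z 1) 0 + min (z 2) 0) *
      (A + max (z 0) 0 + min (z 1) 0 + min (z 2) 0) < 0 := by
    have := prod_aux (A + min (z 1) 0 + min (z 2) 0) (z 0)
    simp only [XX, GG_cst_add, ← hA]
    simp [tau, m1, m2]
    ring_nf at this ⊢
    rw [this]
  have h1 : XX z c 1 (a + tau z 1) ↔ (A + max (z 0) 0 + min (z 1) 0 + min (z 2) 0) *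
      (A + max (z 0) 0 + max (z 1) 0 + min (z 2) 0) < 0 := by
    have := prod_aux (A + max (z 0) 0 + min (z 2) 0) (z 1)
    have m0 := m0.2
    push_cast at m0
    simp only [XX, GG_cst_add, ← hA]
    simp [tau, m0, m2]
    ring_nf at this ⊢
    rw [this]
  have h2 : XX z c 2 (a + tau z 2) ↔ (A + max (z 0) 0 + max (z 1) 0 + min (z 2) 0) *
      (A + max (z 0) 0 + max (z 1) 0 + max (z 2) 0) < 0 := by
    have := prod_aux (A + max (z 0) 0 + max (z 1) 0) (z 2)
    have m0 := m0.2
    have m1 := m1.2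
    push_cast at m0 m1
    have q : (1 : Fin 3) < 2 := by decide
    simp only [XX, GG_cst_add, ← hA]
    simp [tau, m0, m1, q]
    ring_nf at this ⊢
    rw [this]
  simp only [GG_cst_add, ← hA, Matrix.cons_val, m0, m1, m2] at n0 n1 n2 n3
  rw [Fin.sum_univ_three]
  simp only [hK, h0, h1, h2]
  have e1 : A + min (z 0) 0 + min (z 1) 0 + min (z 2) 0 ≤
    A + max (z 0) 0 + min (z 1) 0 + min (z 2) 0 := by linarith
  have e2 : A + max (z 0) 0 + min (z 1) 0 + min (z 2) 0 ≤
    A + max (z 0) 0 + max (z 1) 0 + min (z 2) 0 := by linarith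
  have e3 : A + max (z 0) 0 + max (z 1) 0 + min (z 2) 0 ≤
    A + max (z 0) 0 + max (z 1) 0 + max (z 2) 0 := by linarith
  generalize A + min (z 0) 0 + min (z 1) 0 + min (z 2) 0 = w0 at *
  generalize A + max (z 0) 0 + min (z 1) 0 + min (z 2) 0 = w1 at *
  generalize A + max (z 0) 0 + max (z 1) 0 + min (z 2) 0 = w2 at *
  generalize A + max (z 0) 0 + max (z 1) 0 + max (z 2) 0 = w3 at *
  clear m0 m1 m2 l0 l1 l2 hK h0 h1 h2 hA
  simp only [mul_neg_iff]
  rcases lt_or_gt_of_ne n0 with a0 | a0 <;> rcases lt_or_gt_of_ne n1 with a1 | a1 <;>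
  rcases lt_or_gt_of_ne n2 with a2 | a2 <;> rcases lt_or_gt_of_ne n3 with a3 | a3 <;>
  first
  | (exfalso; linarith)
  | simp [a0, a1, a2, a3, a0.not_gt, a1.not_gt, a2.not_gt, a3.not_gt]

lemma KK_of_nonempty {z : Fin 3 → ℝ} {c : ℝ} (hlat : ∀ p, GG z c (cst p) ≠ 0) {a : Fin 3 → ℤ}
    (h : (TT z c a).Nonempty) : KK z c a := by
  obtain ⟨x, hx, hb⟩ := h
  have k : ∀ j, z j * (a j + dl z j) ≤ z j * x j ∧ z j * x j ≤ z j * (a j + (1 - dl z j)) := by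
    intro j
    obtain ⟨h1, h2⟩ := hb j
    by_cases hz : z j < 0
    · simp only [dl, hz, if_true]; push_cast; constructor <;> nlinarith
    · simp only [dl, hz, if_false]; push_cast; rw [not_lt] at hz; constructor <;> nlinarith
  have k0 := k 0
  have k1 := k 1
  have k2 := k 2
  constructor
  · apply lt_of_le_of_ne _ (hlat _)
    simp [GG, cst] at hx ⊢
    linarith
  · apply lt_of_le_of_ne _ (hlat _).symm
    simp [GG, cst] at hx ⊢
    linarith

lemma interior_of_KK {z : Fin 3 → ℝ} {c : ℝ} {a : Fin 3 → ℤ} (h : KK z c a) :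
    ∃ x ∈ TT z c a, ∀ i, (a i : ℝ) < x i ∧ x i < (a i : ℝ) + 1 := by
  obtain ⟨h1, h2⟩ := h
  set u := cst (a + dl z) with hu
  set v := cst (a + (1 - dl z)) with hv
  set g := GG z c u with hg
  set k := GG z c v with hk
  let s := -g / (k - g)
  have hkg : 0 < k - g := by linarith
  have s0 : 0 < s := div_pos (by linarith) hkg
  have s1 : s < 1 := by rw [div_lt_one hkg]; linarith
  have hs : (1 - s) * g + s * k = 0 := by simp only [s]; field_simp; ring
  have hb : ∀ i, (a i : ℝ) < (1 - s) * u i + s * v i ∧ (1 - s) * u i + s * v i < (a i : ℝ) + 1 := by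
    intro i
    simp only [hu, hv, cst, Pi.add_apply, Pi.sub_apply, Pi.one_apply, dl]
    split_ifs <;> push_cast <;> constructor <;> nlinarith
  refine ⟨fun i => (1 - s) * u i + s * v i, ⟨?_, fun i => ⟨(hb i).1.le, (hb i).2.le⟩⟩, hb⟩
  rw [← hs, hg, hk]
  simp only [GG]; ring

def BB (n : ℕ) : Finset (Fin 3 → ℤ) := Fintype.piFinset (fun _ => Finset.Icc (-(n : ℤ)) (n - 1))

lemma mem_N_iff {z : Fin 3 → ℝ} {c : ℝ} (hlat : ∀ p, GG z c (cst p) ≠ 0) (n : ℕ)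
    (a : Fin 3 → ℤ) :
    ((TT z c a).Nonempty ∧ TT z c a ⊆ {x | ∀ i, |x i| ≤ (n : ℝ)}) ↔ a ∈ BB n ∧ KK z c a := by
  simp only [BB, Fintype.mem_piFinset, Finset.mem_Icc]
  constructor
  · rintro ⟨h1, h2⟩
    have hK := KK_of_nonempty hlat h1
    refine ⟨fun i => ?_, hK⟩
    obtain ⟨x, hx, hb⟩ := interior_of_KK hK
    have := abs_le.1 (h2 hx i)
    have hb := hb i
    have q1 : (-(n : ℤ) : ℝ) < a i + 1 := by push_cast; linarith
    have q2 : (a i : ℝ) < (n : ℤ) := by push_cast; linarith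
    have q1' : -(n : ℤ) < a i + 1 := by exact_mod_cast q1
    have q2' : a i < (n : ℤ) := by exact_mod_cast q2
    omega
  · rintro ⟨h1, h2⟩
    obtain ⟨x, hx, -⟩ := interior_of_KK h2
    refine ⟨⟨x, hx⟩, fun y hy i => ?_⟩
    have hb := hy.2 i
    have q1 : ((-(n : ℤ) : ℤ) : ℝ) ≤ a i := by exact_mod_cast (h1 i).1
    have q2 : (a i : ℝ) ≤ ((n - 1 : ℤ) : ℝ) := by exact_mod_cast (h1 i).2
    push_cast at q1 q2
    rw [abs_le]
    constructor <;> linarith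

def colB (i : Fin 3) (l u : ℤ) : Finset (Fin 3 → ℤ) :=
  Fintype.piFinset (fun j => if j = i then {0} else Finset.Icc l u)

lemma card_colB (i : Fin 3) (l u : ℤ) : (colB i l u).card = (u + 1 - l).toNat ^ 2 := by
  rw [colB, Fintype.card_piFinset, Fin.prod_univ_three]
  fin_cases i <;> simp [pow_two]

def slab (i : Fin 3) (n : ℕ) (l u : ℤ) : Finset (Fin 3 → ℤ) :=
  Fintype.piFinset (fun j => if j = i then Finset.Icc (-(n : ℤ)) (n - 1) else Finset.Icc l u)

lemma mem_slab {i : Fin 3} {n : ℕ} {l u : ℤ} {p : Fin 3 → ℤ} :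
    p ∈ slab i n l u ↔ (-(n : ℤ) ≤ p i ∧ p i ≤ n - 1) ∧ ∀ j, j ≠ i → l ≤ p j ∧ p j ≤ u := by
  simp only [slab, Fintype.mem_piFinset]
  constructor
  · intro h
    refine ⟨by simpa using h i, fun j hj => by simpa [hj] using h j⟩
  · rintro ⟨h1, h2⟩ j
    by_cases hj : j = i
    · subst hj; simpa using h1
    · simpa [hj] using h2 j hj

lemma mem_colB {i : Fin 3} {l u : ℤ} {p : Fin 3 → ℤ} :
    p ∈ colB i l u ↔ p i = 0 ∧ ∀ j, j ≠ i → l ≤ p j ∧ p j ≤ u := by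
  simp only [colB, Fintype.mem_piFinset]
  constructor
  · intro h
    refine ⟨by simpa using h i, fun j hj => by simpa [hj] using h j⟩
  · rintro ⟨h1, h2⟩ j
    by_cases hj : j = i
    · subst hj; simpa using h1
    · simpa [hj] using h2 j hj

open Classical in
def SS (z : Fin 3 → ℝ) (c : ℝ) (n : ℕ) (i : Fin 3) (t : Fin 3 → ℤ) : ℕ :=
  ∑ a ∈ BB n, if XX z c i (a + t) then 1 else 0

open Classical in
lemma slab_bound (z : Fin 3 → ℝ) (c : ℝ) (i : Fin 3) (n : ℕ) (hn : 1 ≤ n) :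
    ((slab i n (-n) n).filter (XX z c i)).card ≤
      ((slab i n (-n + 1) (n - 1)).filter (XX z c i)).card + 8 * n := by
  have sub1 : (slab i n (-n + 1) (n - 1)).filter (XX z c i) ⊆
      (slab i n (-n) n).filter (XX z c i) := by
    intro p hp
    simp only [Finset.mem_filter, mem_slab] at hp ⊢
    refine ⟨⟨hp.1.1, fun j hj => ?_⟩, hp.2⟩
    have := hp.1.2 j hj
    omega
  have sub2 : colB i (-n + 1) (n - 1) ⊆ colB i (-n) n := by
    intro p hp
    simp only [mem_colB] at hp ⊢
    refine ⟨hp.1, fun j hj => ?_⟩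
    have := hp.2 j hj
    omega
  have hc : (colB i (-n) n \ colB i (-n + 1) (n - 1)).card = 8 * n := by
    rw [Finset.card_sdiff_of_subset sub2, card_colB, card_colB]
    obtain ⟨m, rfl⟩ : ∃ m, n = m + 1 := ⟨n - 1, by omega⟩
    rw [show (((m + 1 : ℕ) : ℤ) + 1 - (-((m + 1 : ℕ) : ℤ))).toNat = 2 * m + 3 by omega,
      show (((m + 1 : ℕ) : ℤ) - 1 + 1 - (-((m + 1 : ℕ) : ℤ) + 1)).toNat = 2 * m + 1 by omega]
    rw [Nat.sub_eq_iff_eq_add (by gcongr; omega)]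
    ring
  rw [← hc, ← Finset.card_sdiff_add_card_eq_card sub1, add_comm]
  gcongr 1
  apply Finset.card_le_card_of_injOn (fun p => Function.update p i 0)
  · intro p hp
    simp only [Finset.coe_sdiff, Set.mem_sdiff, Finset.mem_coe, Finset.mem_filter, mem_slab, mem_colB] at hp ⊢
    obtain ⟨⟨⟨h1, h2⟩, h3⟩, h4⟩ := hp
    refine ⟨⟨by simp, fun j hj => by simpa [hj] using h2 j hj⟩, fun h => h4 ⟨⟨h1, fun j hj => ?_⟩, h3⟩⟩
    simpa [hj] using h.2 j hj
  · intro p hp q hq hpq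
    simp only [Finset.coe_sdiff, Set.mem_sdiff, Finset.mem_coe, Finset.mem_filter] at hp hq
    refine XX_unique hp.1.2 hq.1.2 fun j hj => ?_
    simpa [hj] using congrFun hpq j

open Classical in
lemma SS_bounds (z : Fin 3 → ℝ) (c : ℝ) (i : Fin 3) (n : ℕ) {t : Fin 3 → ℤ}
    (ht : t ∈ DD i) :
    ((slab i n (-n + 1) (n - 1)).filter (XX z c i)).card ≤ SS z c n i t ∧
    SS z c n i t ≤ ((slab i n (-n) n).filter (XX z c i)).card := by
  rw [mem_DD] at ht
  have e : SS z c n i t = (((BB n).filter (fun a => XX z c i (a + t))).image (· + t)).card := by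
    rw [Finset.card_image_of_injective _ (add_left_injective t), SS, Finset.card_filter]
  rw [e]
  constructor <;> apply Finset.card_le_card
  · intro p hp
    simp only [Finset.mem_filter, mem_slab, Finset.mem_image] at hp ⊢
    refine ⟨p - t, ⟨?_, by simpa using hp.2⟩, by simp⟩
    simp only [BB, Fintype.mem_piFinset, Finset.mem_Icc, Pi.sub_apply]
    intro j
    by_cases hj : j = i
    · subst hj; rw [ht.1]; simpa using hp.1.1
    · have := hp.1.2 j hj
      rcases ht.2 j hj with h | h <;> rw [h] <;> omega
  · intro p hp
    simp only [Finset.mem_filter, mem_slab, Finset.mem_image] at hp ⊢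
    obtain ⟨a, ⟨h1, h2⟩, rfl⟩ := hp
    simp only [BB, Fintype.mem_piFinset, Finset.mem_Icc] at h1
    refine ⟨⟨?_, fun j hj => ?_⟩, h2⟩
    · rw [Pi.add_apply, ht.1]; simpa using h1 i
    · have := h1 j
      rw [Pi.add_apply]
      rcases ht.2 j hj with h | h <;> rw [h] <;> omega

open Classical in
def NN (z : Fin 3 → ℝ) (c : ℝ) (n : ℕ) : Finset (Fin 3 → ℤ) := (BB n).filter (KK z c)

lemma NN_card {z : Fin 3 → ℝ} {c : ℝ} (hlat : ∀ p, GG z c (cst p) ≠ 0) (n : ℕ) :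
    (NN z c n).card = ∑ i, SS z c n i (tau z i) := by
  classical
  rw [NN, Finset.card_filter]
  simp only [SS]
  rw [Finset.sum_comm]
  refine Finset.sum_congr rfl fun a _ => ?_
  convert path_count hlat a

lemma V_sum {z : Fin 3 → ℝ} {c : ℝ} (hlat : ∀ p, GG z c (cst p) ≠ 0) (n : ℕ) :
    ∑ a ∈ NN z c n, nVert (TT z c a) = ∑ i, ∑ t ∈ DD i, SS z c n i t := by
  classical
  have : ∑ a ∈ NN z c n, nVert (TT z c a) = ∑ a ∈ BB n, nVert (TT z c a) := by
    rw [NN]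
    apply Finset.sum_subset (Finset.filter_subset _ _)
    intro a ha hna
    have hK : ¬ KK z c a := fun h => hna (by simp [ha, h])
    have : TT z c a = ∅ := by
      by_contra h
      exact hK (KK_of_nonempty hlat (Set.nonempty_iff_ne_empty.2 h))
    simp [this, nVert]
  rw [this]
  simp only [SS]
  simp_rw [nVert_TT hlat]
  rw [Finset.sum_comm]
  refine Finset.sum_congr rfl fun i _ => ?_
  rw [Finset.sum_comm]

lemma V_bound {z : Fin 3 → ℝ} {c : ℝ} (hlat : ∀ p, GG z c (cst p) ≠ 0) (n : ℕ) (hn : 1 ≤ n) :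
    |((∑ a ∈ NN z c n, nVert (TT z c a) : ℕ) : ℝ) - 4 * ((NN z c n).card : ℝ)| ≤ 96 * n := by
  rw [V_sum hlat, NN_card hlat]
  have key : ∀ i, |((∑ t ∈ DD i, SS z c n i t : ℕ) : ℝ) - 4 * (SS z c n i (tau z i) : ℝ)| ≤ 32 * n := by
    intro i
    have e : ((∑ t ∈ DD i, SS z c n i t : ℕ) : ℝ) - 4 * (SS z c n i (tau z i) : ℝ) =
        ∑ t ∈ DD i, ((SS z c n i t : ℝ) - SS z c n i (tau z i)) := by
      rw [Finset.sum_sub_distrib, Finset.sum_const, card_DD]; simp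
    rw [e]
    refine (Finset.abs_sum_le_sum_abs _ _).trans ?_
    have : ∀ t ∈ DD i, |(SS z c n i t : ℝ) - SS z c n i (tau z i)| ≤ 8 * n := by
      intro t ht
      obtain ⟨b1, b2⟩ := SS_bounds z c i n ht
      obtain ⟨b3, b4⟩ := SS_bounds z c i n (tau_mem z i)
      have b5 := slab_bound z c i n hn
      have q1 : SS z c n i t ≤ SS z c n i (tau z i) + 8 * n := by omega
      have q2 : SS z c n i (tau z i) ≤ SS z c n i t + 8 * n := by omega
      have q1' : (SS z c n i t : ℝ) ≤ SS z c n i (tau z i) + 8 * n := by exact_mod_cast q1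
      have q2' : (SS z c n i (tau z i) : ℝ) ≤ SS z c n i t + 8 * n := by exact_mod_cast q2
      rw [abs_le]; constructor <;> linarith
    refine (Finset.sum_le_sum this).trans ?_
    rw [Finset.sum_const, card_DD]; simp; linarith
  have k0 := abs_le.1 (key 0)
  have k1 := abs_le.1 (key 1)
  have k2 := abs_le.1 (key 2)
  rw [Fin.sum_univ_three, Fin.sum_univ_three, abs_le]
  push_cast at *
  constructor <;> linarith

lemma N_lower {z : Fin 3 → ℝ} {c : ℝ} (hlat : ∀ p, GG z c (cst p) ≠ 0) (hz : z ≠ 0) :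
    ∃ C : ℕ, ∀ n : ℕ, C ≤ n → (n : ℝ) ^ 2 / 16 ≤ (NN z c n).card := by
  classical
  obtain ⟨i, -, hi⟩ := Finset.exists_max_image Finset.univ (fun i => |z i|) ⟨0, Finset.mem_univ _⟩
  have hzi : 0 < |z i| := by
    obtain ⟨j, hj⟩ := Function.ne_iff.1 hz
    exact (abs_pos.2 hj).trans_le (hi j (Finset.mem_univ _))
  have hzi0 : z i ≠ 0 := abs_pos.1 hzi
  obtain ⟨C, hC⟩ := exists_nat_gt (|c| / |z i|)
  rw [div_lt_iff₀ hzi] at hC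
  refine ⟨2 * C + 4, fun n hn => ?_⟩
  let m := n / 4
  have hm : 4 * m ≤ n := Nat.mul_div_le n 4
  have hm' : n ≤ 4 * (m + 1) := by omega
  let r : (Fin 3 → ℤ) → ℝ := fun q => - GG z c (cst q) / z i
  have hle : (colB i 0 m).card ≤ (NN z c n).card := by
    apply Finset.card_le_card_of_injOn (fun q => Function.update q i ⌊r q⌋)
    · intro q hq
      rw [Finset.mem_coe, mem_colB] at hq
      have hq' : ∀ j, |z j * q j| ≤ if j = i then 0 else |z i| * m := by
        intro j
        split_ifs with hj
        · subst hj; simp [hq.1]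
        · rw [abs_mul]
          have h1 : (0 : ℝ) ≤ q j := by exact_mod_cast (hq.2 j hj).1
          have h2 : (q j : ℝ) ≤ m := by exact_mod_cast (hq.2 j hj).2
          rw [abs_of_nonneg h1]
          exact mul_le_mul (hi j (Finset.mem_univ _)) h2 h1 hzi.le
      have hG : |GG z c (cst q)| ≤ (C + 2 * m) * |z i| := by
        have t0 := abs_le.1 (hq' 0)
        have t1 := abs_le.1 (hq' 1)
        have t2 := abs_le.1 (hq' 2)
        have tc := abs_le.1 hC.le
        simp only [GG, cst]
        rw [abs_le]
        fin_cases i <;> simp at * <;> constructor <;> linarith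
      have hr : |r q| ≤ C + 2 * m := by
        simp only [r]
        rw [abs_div, abs_neg, div_le_iff₀ hzi]; exact hG
      have hr := abs_le.1 hr
      have f1 := Int.floor_le (r q)
      have f2 := Int.lt_floor_add_one (r q)
      rw [Finset.mem_coe, NN, Finset.mem_filter]
      constructor
      · simp only [BB, Fintype.mem_piFinset, Finset.mem_Icc]
        intro j
        by_cases hj : j = i
        · subst hj
          simp only [Function.update_self]
          have g1 : (⌊r q⌋ : ℝ) ≤ ((C + 2 * m : ℤ) : ℝ) := by push_cast; linarith
          have g2 : ((-(C + 2 * m) : ℤ) : ℝ) < ⌊r q⌋ + 1 := by push_cast; linarith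
          have g1' : ⌊r q⌋ ≤ (C + 2 * m : ℤ) := by exact_mod_cast g1
          have g2' : (-(C + 2 * m) : ℤ) < ⌊r q⌋ + 1 := by exact_mod_cast g2
          omega
        · rw [Function.update_of_ne hj]
          have := hq.2 j hj
          omega
      · apply KK_of_nonempty hlat
        refine ⟨Function.update (cst q) i (r q), ?_, fun j => ?_⟩
        · rw [GG_update]
          simp only [cst, hq.1, r]
          field_simp
          simp
        · by_cases hj : j = i
          · subst hj; simp; exact ⟨f1, f2.le⟩
          · simp [hj, cst]
    · intro p hp q hq h
      rw [Finset.mem_coe, mem_colB] at hp hq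
      funext j
      by_cases hj : j = i
      · subst hj; rw [hp.1, hq.1]
      · simpa [hj] using congrFun h j
  rw [card_colB, show ((m : ℤ) + 1 - 0).toNat = m + 1 by omega] at hle
  have h1 : ((m + 1 : ℕ) : ℝ) ^ 2 ≤ (NN z c n).card := by exact_mod_cast hle
  have h2 : (n : ℝ) ≤ 4 * ((m + 1 : ℕ) : ℝ) := by exact_mod_cast hm'
  have h3 : (0 : ℝ) ≤ n := by positivity
  nlinarith

lemma plane_eq (L : AffineSubspace ℝ (Fin 3 → ℝ))
    (hdim : Module.finrank ℝ L.direction = 2) :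
    ∃ z : Fin 3 → ℝ, ∃ c : ℝ, z ≠ 0 ∧ ∀ x, x ∈ L ↔ GG z c x = 0 := by
  have hne : (L : Set (Fin 3 → ℝ)).Nonempty := by
    rw [Set.nonempty_iff_ne_empty]
    intro h
    have : L = ⊥ := (AffineSubspace.coe_eq_bot_iff L).1 h
    rw [this, AffineSubspace.direction_bot, finrank_bot] at hdim
    omega
  obtain ⟨x0, hx0⟩ := hne
  have hlt : L.direction < ⊤ := by
    rw [lt_top_iff_ne_top]
    intro h; rw [h] at hdim; simp at hdim
  obtain ⟨f, hf, hle⟩ := Submodule.exists_le_ker_of_lt_top _ hlt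
  have hker : L.direction = LinearMap.ker f := by
    apply Submodule.eq_of_le_of_finrank_le hle
    have := Module.Dual.finrank_ker_add_one_of_ne_zero hf
    simp at this
    omega
  have hfx : ∀ x, f x = GG (fun i => f (Pi.single i 1)) 0 x := by
    intro x
    have hx : x = x 0 • Pi.single 0 1 + x 1 • Pi.single 1 1 + x 2 • Pi.single 2 1 := by
      funext j; fin_cases j <;> simp
    conv_lhs => rw [hx]
    simp only [map_add, map_smul, smul_eq_mul, GG]
    ring
  refine ⟨fun i => f (Pi.single i 1), f x0, ?_, fun x => ?_⟩
  · intro h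
    apply hf
    ext x
    have := congrFun h
    simp_all
  · rw [← AffineSubspace.vsub_right_mem_direction_iff_mem hx0, hker, LinearMap.mem_ker, vsub_eq_sub,
      map_sub, hfx x]
    simp [GG]

/-- Theorem 7.1. If a two-dimensional affine plane `L ⊂ ℝ³` contains
no lattice point, then the average number of vertices of the tiles `T(a) = L ∩ (a + [0,1]³)`
tends to `4`. -/
theorem ave_tiles_eq_four (L : AffineSubspace ℝ (Fin 3 → ℝ))
    (hdim : Module.finrank ℝ L.direction = 2)
    (hlat : ∀ a : Fin 3 → ℤ, (fun i => (a i : ℝ)) ∉ L)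
    (T : (Fin 3 → ℤ) → Set (Fin 3 → ℝ))
    (hT : ∀ a, T a = (L : Set (Fin 3 → ℝ)) ∩
      {x | ∀ i, (a i : ℝ) ≤ x i ∧ x i ≤ (a i : ℝ) + 1})
    (N : ℕ → Set (Fin 3 → ℤ))
    (hN : ∀ n, N n = {a | (T a).Nonempty ∧ T a ⊆ {x | ∀ i, |x i| ≤ (n : ℝ)}}) :
    Filter.Tendsto
      (fun n : ℕ => (∑ᶠ a ∈ N n, (nVert (T a) : ℝ)) / ((N n).ncard : ℝ))
      Filter.atTop (nhds 4) := by
  obtain ⟨z, c, hz, hL⟩ := plane_eq L hdim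
  have hlat' : ∀ p, GG z c (cst p) ≠ 0 := fun p h => hlat p ((hL _).2 h)
  have hTT : T = TT z c := by
    funext a
    rw [hT]
    ext x
    simp only [Set.mem_inter_iff, SetLike.mem_coe, hL, TT, Set.mem_ofPred_eq]
  subst hTT
  have hNN : ∀ n, N n = (NN z c n : Set (Fin 3 → ℤ)) := by
    intro n
    rw [hN]
    ext a
    rw [Set.mem_ofPred_eq, mem_N_iff hlat']
    simp [NN]
  obtain ⟨C, hC⟩ := N_lower hlat' hz
  rw [← tendsto_sub_nhds_zero_iff]
  have h0 : Filter.Tendsto (fun n : ℕ => (1536 : ℝ) / n) Filter.atTop (nhds 0) :=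
    tendsto_const_div_atTop_nhds_zero_nat _
  refine squeeze_zero_norm' ?_ h0
  filter_upwards [Filter.eventually_ge_atTop (C + 1)] with n hn
  have hn1 : 1 ≤ n := by omega
  have hnp : (0 : ℝ) < n := by exact_mod_cast hn1
  have hlow := hC n (by omega)
  have hV := V_bound hlat' n hn1
  rw [hNN, Set.ncard_coe_finset, finsum_mem_coe_finset, Real.norm_eq_abs]
  push_cast at hV
  set V := ∑ a ∈ NN z c n, (nVert (TT z c a) : ℝ)
  set M : ℝ := ((NN z c n).card : ℝ)
  have hM : 0 < M := lt_of_lt_of_le (by positivity) hlow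
  have e : V / M - 4 = (V - 4 * M) / M := by field_simp
  rw [e, abs_div, abs_of_pos hM, div_le_div_iff₀ hM hnp]
  calc |V - 4 * M| * n ≤ 96 * n * n := by gcongr
    _ ≤ 1536 * M := by nlinarith
end
end

section
/- Let P ⊂ ℝ^d be a convex polytope (the convex hull of a finite point set), let z ∈ ℝ^d be nonzero, and let t ∈ ℝ be such that z·v ≠ t for every vertex (extreme point) v of P. Then the number of vertices of P ∩ {x : z·x ≤ t} plus the number of vertices of P ∩ {x : z·x ≥ t} equals the number of vertices of P plus twice the number of vertices of the section P ∩ {x : z·x = t}. -/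
open scoped Pointwise BigOperators

noncomputable section

theorem aux_fin {d : ℕ} (s : Finset (Fin d → ℝ)) (f : (Fin d → ℝ) →ₗ[ℝ] ℝ) (t : ℝ) :
    (Set.extremePoints ℝ (convexHull ℝ (s : Set (Fin d → ℝ)) ∩ {x | f x = t})).Finite := by
  classical
  have hw : ∀ x : Fin d → ℝ, ∃ w : (Fin d → ℝ) → ℝ, x ∈ convexHull ℝ (s : Set (Fin d → ℝ)) →
      (∀ y ∈ s, 0 ≤ w y) ∧ ∑ y ∈ s, w y = 1 ∧ ∑ y ∈ s, w y • y = x := by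
    intro x
    by_cases h : x ∈ convexHull ℝ (s : Set (Fin d → ℝ))
    · obtain ⟨w, h⟩ := Finset.mem_convexHull'.1 h
      exact ⟨w, fun _ => h⟩
    · exact ⟨0, fun h' => absurd h' h⟩
  choose w hw using hw
  refine Set.Finite.of_finite_image (f := fun x => s.filter (fun i => 0 < w x i))
    ((s.powerset : Set (Finset (Fin d → ℝ))).toFinite.subset ?_) ?_
  · rintro _ ⟨x, _, rfl⟩
    exact Finset.mem_coe.2 (Finset.mem_powerset.2 (Finset.filter_subset _ _))
  · intro x hx y hy hxy
    simp only at hxy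
    rw [mem_extremePoints_iff_left] at hx
    have hyP := hy.1
    obtain ⟨hxP, hx⟩ := hx
    obtain ⟨hx0, hx1, hx2⟩ := hw x hxP.1
    obtain ⟨hy0, hy1, hy2⟩ := hw y hyP.1
    have hev : ∀ᶠ e in nhdsWithin (0 : ℝ) (Set.Ioi 0), ∀ i ∈ s, e * w y i ≤ w x i := by
      rw [Filter.eventually_all_finset]
      intro i hi
      by_cases hp : 0 < w x i
      · have : Filter.Tendsto (fun e : ℝ => e * w y i) (nhdsWithin 0 (Set.Ioi 0)) (nhds 0) := by
          have : Filter.Tendsto (fun e : ℝ => e * w y i) (nhds 0) (nhds (0 * w y i)) :=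
            (continuous_id.mul continuous_const).tendsto 0
          rw [zero_mul] at this
          exact this.mono_left nhdsWithin_le_nhds
        exact (this.eventually (gt_mem_nhds hp)).mono fun _ h => le_of_lt h
      · have h1 : ¬ 0 < w y i := by
          intro h
          have : i ∈ s.filter (fun i => 0 < w x i) := by
            rw [hxy]; exact Finset.mem_filter.2 ⟨hi, h⟩
          exact hp (Finset.mem_filter.1 this).2
        have h2 : w y i = 0 := le_antisymm (not_lt.1 h1) (hy0 i hi)
        filter_upwards with e
        rw [h2, mul_zero]
        exact hx0 i hi
    obtain ⟨e, he, he0⟩ := (hev.and self_mem_nhdsWithin).exists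
    have he0 : 0 < e := he0
    have hq : x + e • (x - y) ∈ convexHull ℝ (s : Set (Fin d → ℝ)) := by
      rw [Finset.mem_convexHull']
      refine ⟨fun i => w x i + e * (w x i - w y i), ?_, ?_, ?_⟩
      · intro i hi
        have := he i hi
        have := mul_nonneg he0.le (hx0 i hi)
        have := hx0 i hi
        nlinarith
      · rw [Finset.sum_add_distrib, ← Finset.mul_sum, Finset.sum_sub_distrib, hx1, hy1]; ring
      · simp only [add_smul, mul_smul, sub_smul]
        rw [Finset.sum_add_distrib, ← Finset.smul_sum, Finset.sum_sub_distrib, hx2, hy2]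
    have hxt : f x = t := hxP.2
    have hyt : f y = t := hyP.2
    refine (hx y hyP (x + e • (x - y)) ⟨hq, ?_⟩ ?_).symm
    · simp [hxt, hyt]
    · refine ⟨e / (1 + e), 1 / (1 + e), by positivity, by positivity, by field_simp; ring, ?_⟩
      ext i
      simp only [Pi.add_apply, Pi.smul_apply, Pi.sub_apply, smul_eq_mul]
      field_simp
      ring

theorem aux_ext {d : ℕ} (P : Set (Fin d → ℝ)) (hP : Convex ℝ P)
    (f : (Fin d → ℝ) →ₗ[ℝ] ℝ) (t : ℝ) (hv : ∀ v ∈ Set.extremePoints ℝ P, f v ≠ t) :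
    Set.extremePoints ℝ (P ∩ {x | f x ≤ t}) =
      (Set.extremePoints ℝ P ∩ {x | f x < t}) ∪ Set.extremePoints ℝ (P ∩ {x | f x = t}) := by
  ext x
  constructor
  · intro hx
    have hxm : x ∈ P ∧ f x ≤ t := hx.1
    rcases hxm.2.lt_or_eq with h | h
    · left
      refine ⟨?_, h⟩
      rw [mem_extremePoints_iff_left] at hx ⊢
      refine ⟨hxm.1, ?_⟩
      intro a ha b hb hab
      have key : ∀ c, ∀ᶠ e in nhdsWithin (0 : ℝ) (Set.Ioi 0), f (x + e • (c - x)) ≤ t := by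
        intro c
        have : Filter.Tendsto (fun e : ℝ => f x + e * (f c - f x)) (nhds 0)
            (nhds (f x + 0 * (f c - f x))) :=
          (continuous_const.add (continuous_id.mul continuous_const)).tendsto 0
        rw [zero_mul, add_zero] at this
        filter_upwards [(this.mono_left nhdsWithin_le_nhds).eventually (gt_mem_nhds h)] with e he
        simpa using he.le
      have h1 : ∀ᶠ e in nhdsWithin (0 : ℝ) (Set.Ioi 0), e < 1 :=
        nhdsWithin_le_nhds (gt_mem_nhds zero_lt_one)
      obtain ⟨e, ⟨⟨h1, h2⟩, h3⟩, h4⟩ :=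
        (((key a).and (key b)).and (h1)).and self_mem_nhdsWithin |>.exists
      have h4 : 0 < e := h4
      have hm : ∀ c ∈ P, x + e • (c - x) ∈ P := fun c hc =>
        hP.add_smul_sub_mem hxm.1 hc ⟨h4.le, h3.le⟩
      have := hx.2 _ ⟨hm a ha, h1⟩ _ ⟨hm b hb, h2⟩ ?_
      · have h5 : e • (a - x) = 0 := by simpa using this
        rcases smul_eq_zero.1 h5 with h | h
        · exact absurd h h4.ne'
        · exact sub_eq_zero.1 h
      · obtain ⟨p, q, hp, hq, hpq, rfl⟩ := hab
        refine ⟨p, q, hp, hq, hpq, ?_⟩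
        obtain rfl : p = 1 - q := by linarith
        module
    · right
      exact inter_extremePoints_subset_extremePoints_of_subset
        (show P ∩ {x | f x = t} ⊆ P ∩ {x | f x ≤ t} from
          fun y hy => ⟨hy.1, (show f y = t from hy.2).le⟩) ⟨⟨hxm.1, h⟩, hx⟩
  · rintro (⟨hx, h⟩ | hx)
    · exact inter_extremePoints_subset_extremePoints_of_subset Set.inter_subset_left
        ⟨⟨hx.1, (show f x < t from h).le⟩, hx⟩
    · have hxm : x ∈ P ∧ f x = t := hx.1
      rw [mem_extremePoints] at hx
      rw [mem_extremePoints]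
      refine ⟨⟨hxm.1, hxm.2.le⟩, ?_⟩
      intro a ha b hb hab
      have ha2 : f a ≤ t := ha.2
      have hb2 : f b ≤ t := hb.2
      have hab' := hab
      obtain ⟨p, q, hp, hq, hpq, hh⟩ := hab'
      have h1 : p * f a + q * f b = t := by
        rw [← hxm.2, ← hh]; simp
      have h2 : p * (t - f a) + q * (t - f b) = 0 := by
        linear_combination t * hpq - h1
      have h3 := mul_nonneg hp.le (sub_nonneg.2 ha2)
      have h4 := mul_nonneg hq.le (sub_nonneg.2 hb2)
      have h5 : p * (t - f a) = 0 := by linarith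
      have h6 : q * (t - f b) = 0 := by linarith
      have h7 : f a = t := by
        rcases mul_eq_zero.1 h5 with h | h
        · exact absurd h hp.ne'
        · linarith
      have h8 : f b = t := by
        rcases mul_eq_zero.1 h6 with h | h
        · exact absurd h hq.ne'
        · linarith
      exact hx.2 a ⟨ha.1, h7⟩ b ⟨hb.1, h8⟩ hab

/-- Cutting a polytope `P` by a hyperplane `{x : z·x = t}` avoiding the
vertices of `P`: the vertex numbers of the two pieces add up to the number of vertices of
`P` plus twice the number of vertices of the section. -/
theorem vert_count_cut (d : ℕ) (P : Set (Fin d → ℝ)) (hP : IsPolytope P)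
    (z : Fin d → ℝ) (hz : z ≠ 0) (t : ℝ)
    (hvert : ∀ v ∈ Set.extremePoints ℝ P, dotp z v ≠ t) :
    nVert (P ∩ {x | dotp z x ≤ t}) + nVert (P ∩ {x | t ≤ dotp z x}) =
      nVert P + 2 * nVert (P ∩ {x | dotp z x = t}) := by
  obtain ⟨s, rfl⟩ := hP
  set P := convexHull ℝ (s : Set (Fin d → ℝ)) with hPdef
  have hc : Convex ℝ P := convex_convexHull ℝ _
  let f : (Fin d → ℝ) →ₗ[ℝ] ℝ := ∑ i, z i • LinearMap.proj i
  have hf : ∀ x, dotp z x = f x := fun x => by simp [f, dotp]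
  simp only [nVert, hf] at hvert ⊢
  have e1 := aux_ext P hc f t hvert
  have e2 := aux_ext P hc (-f) (-t) (fun v hv h => hvert v hv (neg_injective h))
  simp only [LinearMap.neg_apply, neg_le_neg_iff, neg_lt_neg_iff, neg_inj] at e2
  have fS := aux_fin s f t
  have fP : (Set.extremePoints ℝ P).Finite :=
    s.finite_toSet.subset extremePoints_convexHull_subset
  have d1 : Disjoint (Set.extremePoints ℝ P ∩ {x | f x < t})
      (Set.extremePoints ℝ (P ∩ {x | f x = t})) :=
    Set.disjoint_left.2 fun x h h' => (ne_of_lt h.2) h'.1.2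
  have d2 : Disjoint (Set.extremePoints ℝ P ∩ {x | t < f x})
      (Set.extremePoints ℝ (P ∩ {x | f x = t})) :=
    Set.disjoint_left.2 fun x h h' => (ne_of_gt h.2) h'.1.2
  have d3 : Disjoint (Set.extremePoints ℝ P ∩ {x | f x < t})
      (Set.extremePoints ℝ P ∩ {x | t < f x}) :=
    Set.disjoint_left.2 fun x h h' => lt_asymm (show f x < t from h.2) h'.2
  have e3 : Set.extremePoints ℝ P = (Set.extremePoints ℝ P ∩ {x | f x < t}) ∪
      (Set.extremePoints ℝ P ∩ {x | t < f x}) := by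
    ext x
    constructor
    · intro h
      rcases lt_or_gt_of_ne (hvert x h) with h' | h'
      · exact Or.inl ⟨h, h'⟩
      · exact Or.inr ⟨h, h'⟩
    · rintro (h | h) <;> exact h.1
  have e4 := Set.ncard_union_eq d3 (fP.subset Set.inter_subset_left)
    (fP.subset Set.inter_subset_left)
  rw [← e3] at e4
  rw [e1, e2, Set.ncard_union_eq d1 (fP.subset Set.inter_subset_left) fS,
    Set.ncard_union_eq d2 (fP.subset Set.inter_subset_left) fS, e4]
  ring
end
end

section
/- Let P ⊂ ℝ^d be a convex polytope with nonempty interior, with V₀ vertices, and let z ∈ ℝ^d be nonzero, with t⁻ = min{z·x : x ∈ P} and t⁺ = max{z·x : x ∈ P}. Then (1/(t⁺−t⁻)) · ∫_{t⁻}^{t⁺} ( (number of vertices of P ∩ {x : z·x ≤ t}) + (number of vertices of P ∩ {x : z·x ≥ t}) )/2 dt = V₀/2 + A(P,z). -/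
open scoped Pointwise BigOperators

noncomputable section

section Geo

variable {E : Type*} [AddCommGroup E] [Module ℝ E]

/-- the minimal face of `P` at `x` -/
def minFace (P : Set E) (x : E) : Set E := {p | p ∈ P ∧ ∃ ε : ℝ, 0 < ε ∧ x + ε • (x - p) ∈ P}

theorem minFace_shrink {P : Set E} (hP : Convex ℝ P) {x p : E} (hx : x ∈ P) {ε δ : ℝ}
    (hδ : 0 ≤ δ) (hle : δ ≤ ε) (h : x + ε • (x - p) ∈ P) : x + δ • (x - p) ∈ P := by
  rcases eq_or_lt_of_le (hδ.trans hle) with h0 | h0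
  · have : δ = 0 := by linarith
    simpa [this] using hx
  · have := hP.add_smul_mem hx h (t := δ / ε) ⟨by positivity, (div_le_one h0).2 hle⟩
    rwa [smul_smul, div_mul_cancel₀ _ h0.ne'] at this

theorem minFace_convex {P : Set E} (hP : Convex ℝ P) {x : E} (hx : x ∈ P) :
    Convex ℝ (minFace P x) := by
  rintro p ⟨hp, ε, hε, h1⟩ q ⟨hq, δ, hδ, h2⟩ a b ha hb hab
  refine ⟨hP hp hq ha hb hab, min ε δ, lt_min hε hδ, ?_⟩
  have h1' := minFace_shrink hP hx (lt_min hε hδ).le (min_le_left _ _) h1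
  have h2' := minFace_shrink hP hx (lt_min hε hδ).le (min_le_right _ _) h2
  have := hP h1' h2' ha hb hab
  convert this using 1
  obtain rfl : b = 1 - a := by linarith
  module

theorem minFace_left {P : Set E} (hP : Convex ℝ P) {x p a b : E} (hx : x ∈ P)
    (hp : p ∈ minFace P x) (ha : a ∈ P) (hb : b ∈ P) (hab : p ∈ openSegment ℝ a b) :
    a ∈ minFace P x := by
  obtain ⟨hp, ε, hε, h1⟩ := hp
  obtain ⟨α, β, hα, hβ, hs, rfl⟩ := hab
  refine ⟨ha, (ε * α) / (1 + ε * β), by positivity, ?_⟩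
  have hd : (0:ℝ) < 1 + ε * β := by positivity
  have := hP h1 hb (a := 1 / (1 + ε * β)) (b := ε * β / (1 + ε * β)) (by positivity) (by positivity)
    (by field_simp)
  convert this using 1
  obtain rfl : β = 1 - α := by linarith
  match_scalars <;> field_simp <;> ring

theorem mem_minFace_of_openSegment {P : Set E} {x a b : E}
    (ha : a ∈ P) (hb : b ∈ P) (hab : x ∈ openSegment ℝ a b) :
    a ∈ minFace P x := by
  obtain ⟨α, β, hα, hβ, hs, rfl⟩ := hab
  refine ⟨ha, α / β, by positivity, ?_⟩
  convert hb using 1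
  obtain rfl : α = 1 - β := by linarith
  match_scalars <;> field_simp <;> ring

/-- points of the minimal face on the level of `x` -/
theorem eq_of_minFace_level {P : Set E} (L : E →ₗ[ℝ] ℝ) {t : ℝ} {x p : E}
    (hx : x ∈ (P ∩ {y | L y = t}).extremePoints ℝ) (hp : p ∈ minFace P x) (hpt : L p = t) :
    p = x := by
  obtain ⟨hp, ε, hε, h1⟩ := hp
  have hxt : L x = t := hx.1.2
  refine hx.2 ⟨hp, hpt⟩ (x₂ := x + ε • (x - p)) ⟨h1, ?_⟩ ?_
  · simp [hxt, hpt]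
  · refine ⟨ε / (1 + ε), 1 / (1 + ε), by positivity, by positivity, by field_simp; ring, ?_⟩
    match_scalars <;> field_simp <;> ring

theorem exists_level (L : E →ₗ[ℝ] ℝ) {t : ℝ} {a b : E} (ha : L a < t) (hb : t < L b) :
    ∃ y ∈ openSegment ℝ a b, L y = t := by
  have hd : 0 < L b - L a := by linarith
  have h1 : 0 < L b - t := by linarith
  have h2 : 0 < t - L a := by linarith
  refine ⟨((L b - t) / (L b - L a)) • a + ((t - L a) / (L b - L a)) • b,
    ⟨_, _, by positivity, by positivity, by field_simp; ring, rfl⟩, ?_⟩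
  simp only [map_add, map_smul, smul_eq_mul]
  field_simp
  ring

theorem level_unique (L : E →ₗ[ℝ] ℝ) {a b x y : E} (hne : L a ≠ L b)
    (hx : x ∈ segment ℝ a b) (hy : y ∈ segment ℝ a b) (h : L x = L y) : x = y := by
  obtain ⟨α, β, hα, hβ, hs, rfl⟩ := hx
  obtain ⟨γ, δ, hγ, hδ, hs', rfl⟩ := hy
  obtain rfl : β = 1 - α := by linarith
  obtain rfl : δ = 1 - γ := by linarith
  simp only [map_add, map_smul, smul_eq_mul] at h
  have : (α - γ) * (L a - L b) = 0 := by linarith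
  rcases mul_eq_zero.1 this with h | h
  · obtain rfl : α = γ := by linarith
    rfl
  · exact absurd (by linarith) hne

theorem mem_open_of_minFace {P : Set E} (hP : Convex ℝ P) (L : E →ₗ[ℝ] ℝ) {t : ℝ} {x a b : E}
    (hx : x ∈ (P ∩ {y | L y = t}).extremePoints ℝ) (ha : a ∈ minFace P x) (hb : b ∈ minFace P x)
    (hat : L a < t) (hbt : t < L b) : x ∈ openSegment ℝ a b := by
  obtain ⟨y, hy, hyt⟩ := exists_level L hat hbt
  have := eq_of_minFace_level L hx
    ((minFace_convex hP hx.1.1).segment_subset ha hb (openSegment_subset_segment _ _ _ hy)) hyt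
  exact this ▸ hy

theorem mem_segment_of_ext {P : Set E} {x u w a : E} (hu : u ∈ P.extremePoints ℝ) (hw : w ∈ P)
    (ha : a ∈ P) (h1 : x ∈ openSegment ℝ u w) (h2 : x ∈ openSegment ℝ a w) :
    a ∈ segment ℝ u w := by
  obtain ⟨α, β, hα, hβ, hs, rfl⟩ := h1
  obtain ⟨γ, δ, hγ, hδ, hs', h⟩ := h2
  obtain rfl : β = 1 - α := by linarith
  obtain rfl : δ = 1 - γ := by linarith
  rcases le_or_gt α γ with hle | hlt
  · refine ⟨α / γ, 1 - α / γ, by positivity, by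
      have := (div_le_one hγ).2 hle
      linarith, by ring, ?_⟩
    have : γ • a = α • u + (γ - α) • w := by
      have h' : γ • a = (γ • a + (1 - γ) • w) - (1 - γ) • w := by module
      rw [h', h]; module
    have h3 : a = γ⁻¹ • (γ • a) := by rw [smul_smul, inv_mul_cancel₀ hγ.ne', one_smul]
    rw [h3, this]
    match_scalars <;> field_simp
  · have : α • u = γ • a + (α - γ) • w := by
      have h' : α • u = (α • u + (1 - α) • w) - (1 - α) • w := by module
      rw [h', ← h]; module
    have h3 : u = α⁻¹ • (α • u) := by rw [smul_smul, inv_mul_cancel₀ hα.ne', one_smul]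
    have : a = u := by
      refine hu.2 ha hw ⟨γ / α, 1 - γ / α, by positivity, by
        have := (div_lt_one hα).2 hlt
        linarith, by ring, ?_⟩
      rw [h3, this]
      match_scalars <;> field_simp
    rw [this]
    exact left_mem_segment _ _ _

/-- if the crossing point is a vertex of the section, the segment is a face -/
theorem isExtreme_of_section {P : Set E} (hP : Convex ℝ P) (L : E →ₗ[ℝ] ℝ) {t : ℝ} {x u w : E}
    (hx : x ∈ (P ∩ {y | L y = t}).extremePoints ℝ) (hu : u ∈ P.extremePoints ℝ)
    (hw : w ∈ P.extremePoints ℝ) (hxs : x ∈ openSegment ℝ u w) (hut : L u < t) (hwt : t < L w) :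
    IsExtreme ℝ P (segment ℝ u w) := by
  have huF := mem_minFace_of_openSegment hu.1 hw.1 hxs
  have hwF := mem_minFace_of_openSegment hw.1 hu.1 (openSegment_symm ℝ u w ▸ hxs)
  refine ⟨hP.segment_subset hu.1 hw.1, fun a ha b hb p hp hpab => ?_⟩
  have hpF := (minFace_convex hP hx.1.1).segment_subset huF hwF hp
  have haF := minFace_left hP hx.1.1 hpF ha hb hpab
  rcases lt_trichotomy (L a) t with h | h | h
  · exact mem_segment_of_ext hu hw.1 ha hxs (mem_open_of_minFace hP L hx haF hwF h hwt)
  · rw [eq_of_minFace_level L hx haF h]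
    exact openSegment_subset_segment _ _ _ hxs
  · rw [segment_symm]
    refine mem_segment_of_ext hw hu.1 ha (openSegment_symm ℝ u w ▸ hxs) ?_
    rw [openSegment_symm]
    exact mem_open_of_minFace hP L hx huF haF hut h

theorem section_of_isExtreme {P : Set E} (L : E →ₗ[ℝ] ℝ) {t : ℝ} {x u w : E}
    (hE : IsExtreme ℝ P (segment ℝ u w)) (hne : L u ≠ L w)
    (hxs : x ∈ segment ℝ u w) (hxt : L x = t) :
    x ∈ (P ∩ {y | L y = t}).extremePoints ℝ := by
  refine ⟨⟨hE.1 hxs, hxt⟩, fun a ha b hb hab => ?_⟩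
  exact level_unique L hne (hE.2 ha.1 hb.1 hxs hab) hxs (ha.2.trans hxt.symm)

/-- every vertex of a generic section is on a crossing segment -/
theorem exists_pair {P : Set E} (L : E →ₗ[ℝ] ℝ) {t : ℝ} {x : E} (V : Finset E)
    (hV : P = convexHull ℝ (V : Set E)) (hx : x ∈ (P ∩ {y | L y = t}).extremePoints ℝ)
    (hgen : ∀ v ∈ V, L v ≠ t) :
    ∃ u ∈ V, ∃ w ∈ V, L u < t ∧ t < L w ∧ x ∈ openSegment ℝ u w := by
  have hP : Convex ℝ P := hV ▸ convex_convexHull ℝ _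
  have hxP := hx.1.1
  have hxt : L x = t := hx.1.2
  rw [hV, Finset.mem_convexHull'] at hxP
  obtain ⟨c, hc0, hc1, hcx⟩ := hxP
  have hF : ∀ v ∈ V, 0 < c v → v ∈ minFace P x := by
    classical
    intro v hv hcv
    refine ⟨hV ▸ subset_convexHull ℝ _ hv, c v, hcv, ?_⟩
    rw [hV, Finset.mem_convexHull']
    refine ⟨fun y => (1 + c v) * c y - if y = v then c v else 0, fun y hy => ?_, ?_, ?_⟩
    · have := hc0 y hy
      dsimp only
      split_ifs with h
      · subst h; nlinarith
      · have : 0 ≤ (1 + c v) * c y := by positivity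
        linarith
    · rw [Finset.sum_sub_distrib, ← Finset.mul_sum, hc1]
      simp [hv]
    · simp only [sub_smul, Finset.sum_sub_distrib, mul_smul, ← Finset.smul_sum, hcx, ite_smul,
        zero_smul]
      simp only [Finset.sum_ite_eq', hv, if_true]
      module
  have hsum : ∑ v ∈ V, c v * (L v - t) = 0 := by
    simp only [mul_sub, Finset.sum_sub_distrib, ← Finset.sum_mul, hc1]
    rw [← hxt, ← hcx]
    simp
  have hex : ∃ v ∈ V, c v ≠ 0 := by
    by_contra! h
    rw [Finset.sum_eq_zero h] at hc1
    exact zero_ne_one hc1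
  obtain ⟨v, hv, hcv⟩ := hex
  have hne : ∃ v ∈ V, c v * (L v - t) ≠ 0 :=
    ⟨v, hv, mul_ne_zero hcv (sub_ne_zero.2 (hgen v hv))⟩
  have hlow : ∃ u ∈ V, c u * (L u - t) < 0 := by
    by_contra! h
    obtain ⟨v, hv, h'⟩ := hne
    exact h' ((Finset.sum_eq_zero_iff_of_nonneg h).1 hsum v hv)
  have hhigh : ∃ u ∈ V, 0 < c u * (L u - t) := by
    by_contra! h
    obtain ⟨v, hv, h'⟩ := hne
    exact h' ((Finset.sum_eq_zero_iff_of_nonpos h).1 hsum v hv)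
  obtain ⟨u, hu, hu'⟩ := hlow
  obtain ⟨w, hw, hw'⟩ := hhigh
  have h0u := hc0 u hu
  have h0w := hc0 w hw
  have hcu : 0 < c u := lt_of_le_of_ne h0u (by rintro h; rw [← h] at hu'; simp at hu')
  have hcw : 0 < c w := lt_of_le_of_ne h0w (by rintro h; rw [← h] at hw'; simp at hw')
  have h1 : L u < t := by nlinarith
  have h2 : t < L w := by nlinarith
  exact ⟨u, hu, w, hw, h1, h2, mem_open_of_minFace hP L hx (hF u hu hcu) (hF w hw hcw) h1 h2⟩

/-- vertices of the lower piece -/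
theorem ext_lower {P : Set E} (hP : Convex ℝ P) (L : E →ₗ[ℝ] ℝ) (t : ℝ) :
    (P ∩ {y | L y ≤ t}).extremePoints ℝ =
      {v | v ∈ P.extremePoints ℝ ∧ L v < t} ∪ (P ∩ {y | L y = t}).extremePoints ℝ := by
  ext x
  constructor
  · intro hx
    have hxt : L x ≤ t := hx.1.2
    rcases lt_or_eq_of_le hxt with h | h
    · left
      refine ⟨⟨hx.1.1, fun a ha b hb hab => ?_⟩, h⟩
      obtain ⟨α, β, hα, hβ, hs, hxe⟩ := hab
      have hsmall : ∃ ε : ℝ, 0 < ε ∧ ε ≤ 1 ∧ ε * (L a - L x) ≤ t - L x ∧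
          ε * (L b - L x) ≤ t - L x := by
        have hM : 0 < 1 + |L a - L x| + |L b - L x| + (t - L x) := by
          have := abs_nonneg (L a - L x)
          have := abs_nonneg (L b - L x)
          linarith
        have h1 := le_abs_self (L a - L x)
        have h2 := le_abs_self (L b - L x)
        have h3 := abs_nonneg (L a - L x)
        have h4 := abs_nonneg (L b - L x)
        have h5 : 0 < t - L x := by linarith
        refine ⟨(t - L x) / (1 + |L a - L x| + |L b - L x| + (t - L x)), by positivity, ?_, ?_, ?_⟩
        · rw [div_le_one hM]; linarith
        · rw [div_mul_eq_mul_div, div_le_iff₀ hM]; nlinarith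
        · rw [div_mul_eq_mul_div, div_le_iff₀ hM]; nlinarith
      obtain ⟨ε, hε, hε1, e1, e2⟩ := hsmall
      have key := hx.2 (x₁ := x + ε • (a - x)) (x₂ := x + ε • (b - x))
        ⟨hP.add_smul_sub_mem hx.1.1 ha ⟨hε.le, hε1⟩, by
          simp only [Set.mem_setOf_eq, map_add, map_smul, map_sub, smul_eq_mul]; linarith⟩
        ⟨hP.add_smul_sub_mem hx.1.1 hb ⟨hε.le, hε1⟩, by
          simp only [Set.mem_setOf_eq, map_add, map_smul, map_sub, smul_eq_mul]; linarith⟩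
        ⟨α, β, hα, hβ, hs, by
          have : α • (x + ε • (a - x)) + β • (x + ε • (b - x)) =
            (α + β) • x + ε • ((α • a + β • b) - (α + β) • x) := by module
          rw [this, hxe, hs]; module⟩
      have h0 : ε • (a - x) = 0 := by simpa using key
      rcases smul_eq_zero.1 h0 with h0 | h0
      · exact absurd h0 hε.ne'
      · exact sub_eq_zero.1 h0
    · right
      exact ⟨⟨hx.1.1, h⟩, fun a ha b hb hab => hx.2 ⟨ha.1, le_of_eq ha.2⟩ ⟨hb.1, le_of_eq hb.2⟩ hab⟩
  · rintro (⟨hx, h⟩ | hx)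
    · exact ⟨⟨hx.1, h.le⟩, fun a ha b hb hab => hx.2 ha.1 hb.1 hab⟩
    · refine ⟨⟨hx.1.1, le_of_eq hx.1.2⟩, fun a ha b hb hab => ?_⟩
      have hxt : L x = t := hx.1.2
      have hat : L a ≤ t := ha.2
      have hbt : L b ≤ t := hb.2
      have hab' := hab
      obtain ⟨α, β, hα, hβ, hs, hxe⟩ := hab'
      rw [← hxe] at hxt
      simp only [map_add, map_smul, smul_eq_mul] at hxt
      obtain rfl : β = 1 - α := by linarith
      refine hx.2 ⟨ha.1, ?_⟩ ⟨hb.1, ?_⟩ hab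
      · show L a = t
        nlinarith
      · show L b = t
        nlinarith

/-- crossing point of a segment with a level -/
def crossPt (L : E →ₗ[ℝ] ℝ) (t : ℝ) (e : E × E) : E :=
  ((L e.2 - t) / (L e.2 - L e.1)) • e.1 + ((t - L e.1) / (L e.2 - L e.1)) • e.2

theorem crossPt_spec (L : E →ₗ[ℝ] ℝ) {t : ℝ} {e : E × E} (ha : L e.1 < t) (hb : t < L e.2) :
    crossPt L t e ∈ openSegment ℝ e.1 e.2 ∧ L (crossPt L t e) = t := by
  have hd : 0 < L e.2 - L e.1 := by linarith
  have h1 : 0 < L e.2 - t := by linarith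
  have h2 : 0 < t - L e.1 := by linarith
  refine ⟨⟨_, _, by positivity, by positivity, by field_simp; ring, rfl⟩, ?_⟩
  simp only [crossPt, map_add, map_smul, smul_eq_mul]
  field_simp
  ring

theorem section_eq_image {P : Set E} (L : E →ₗ[ℝ] ℝ) {t : ℝ} (V : Finset E)
    (hVe : (V : Set E) = P.extremePoints ℝ)
    (hV : P = convexHull ℝ (V : Set E)) (hgen : ∀ v ∈ V, L v ≠ t) :
    (P ∩ {y | L y = t}).extremePoints ℝ = crossPt L t ''
      {e | (e.1 ∈ V ∧ e.2 ∈ V) ∧ IsExtreme ℝ P (segment ℝ e.1 e.2) ∧ L e.1 < t ∧ t < L e.2} := by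
  have hP : Convex ℝ P := hV ▸ convex_convexHull ℝ _
  ext x
  constructor
  · intro hx
    obtain ⟨u, hu, w, hw, hut, hwt, hxs⟩ := exists_pair L V hV hx hgen
    have hu' : u ∈ P.extremePoints ℝ := hVe ▸ hu
    have hw' : w ∈ P.extremePoints ℝ := hVe ▸ hw
    refine ⟨(u, w), ⟨⟨hu, hw⟩, isExtreme_of_section hP L hx hu' hw' hxs hut hwt, hut, hwt⟩, ?_⟩
    obtain ⟨h1, h2⟩ := crossPt_spec (e := (u, w)) L hut hwt
    exact level_unique L (hut.trans hwt).ne (openSegment_subset_segment _ _ _ h1)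
      (openSegment_subset_segment _ _ _ hxs) (h2.trans hx.1.2.symm)
  · rintro ⟨e, ⟨-, hE, h1, h2⟩, rfl⟩
    obtain ⟨h3, h4⟩ := crossPt_spec L h1 h2
    exact section_of_isExtreme L hE (h1.trans h2).ne (openSegment_subset_segment _ _ _ h3) h4

theorem crossPt_injOn {P : Set E} (L : E →ₗ[ℝ] ℝ) {t : ℝ} (V : Finset E)
    (hVe : (V : Set E) = P.extremePoints ℝ) :
    Set.InjOn (crossPt L t)
      {e | (e.1 ∈ V ∧ e.2 ∈ V) ∧ IsExtreme ℝ P (segment ℝ e.1 e.2) ∧ L e.1 < t ∧ t < L e.2} := by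
  rintro ⟨u, w⟩ ⟨⟨hu, hw⟩, hE, h1, h2⟩ ⟨u', w'⟩ ⟨⟨hu', hw'⟩, hE', h1', h2'⟩ heq
  have e1 : ∀ v ∈ V, v ∈ P.extremePoints ℝ := fun v hv => hVe ▸ hv
  dsimp only at *
  obtain ⟨h3, h4⟩ := crossPt_spec (e := (u, w)) L h1 h2
  obtain ⟨h3', h4'⟩ := crossPt_spec (e := (u', w')) L h1' h2'
  have hs := openSegment_subset_segment _ _ _ h3
  rw [heq] at hs
  have m1 := hE.2 (e1 _ hu').1 (e1 _ hw').1 hs h3'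
  have m2 := hE.2 (e1 _ hw').1 (e1 _ hu').1 hs (openSegment_symm ℝ u' w' ▸ h3')
  have f1 := (mem_extremePoints_iff_forall_segment.1 (e1 _ hu')).2 u (e1 _ hu).1 w (e1 _ hw).1 m1
  have f2 := (mem_extremePoints_iff_forall_segment.1 (e1 _ hw')).2 u (e1 _ hu).1 w (e1 _ hw).1 m2
  have g1 : u = u' := by
    rcases f1 with h | h
    · exact h
    · rw [h] at h2; linarith
  have g2 : w = w' := by
    rcases f2 with h | h
    · rw [h] at h1; linarith
    · exact h
  rw [g1, g2]

end Geo

/-- `dotp z` as a linear map -/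
def dotL {d : ℕ} (z : Fin d → ℝ) : (Fin d → ℝ) →ₗ[ℝ] ℝ where
  toFun := dotp z
  map_add' x y := by simp [dotp, mul_add, Finset.sum_add_distrib]
  map_smul' c x := by
    simp only [dotp, Pi.smul_apply, smul_eq_mul, RingHom.id_apply, Finset.mul_sum]
    exact Finset.sum_congr rfl fun i _ => by ring

theorem dotL_apply {d : ℕ} (z x : Fin d → ℝ) : dotL z x = dotp z x := rfl

theorem tMin_lt_tMax {d : ℕ} {P : Set (Fin d → ℝ)} (hc : IsCompact P)
    (hint : (interior P).Nonempty) {z : Fin d → ℝ} (hz : z ≠ 0) : tMin P z < tMax P z := by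
  have hcont : Continuous (dotp z) := by unfold dotp; fun_prop
  obtain ⟨x, hx⟩ := hint
  have hcomp := hc.image hcont
  have hzz : 0 < dotp z z := by
    obtain ⟨i, hi⟩ := Function.ne_iff.1 hz
    exact Finset.sum_pos' (fun i _ => mul_self_nonneg _) ⟨i, Finset.mem_univ _, mul_self_pos.2 hi⟩
  have hnb : ∀ᶠ ε : ℝ in nhds 0, x + ε • z ∈ P := by
    have hcx : Continuous (fun ε : ℝ => x + ε • z) := by fun_prop
    have : Filter.Tendsto (fun ε : ℝ => x + ε • z) (nhds 0) (nhds x) := by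
      simpa using hcx.tendsto 0
    exact this.eventually (mem_interior_iff_mem_nhds.1 hx)
  obtain ⟨δ, hδ, hball⟩ := Metric.eventually_nhds_iff.1 hnb
  have hmem : x + (δ / 2) • z ∈ P := hball (by
    rw [Real.dist_eq, sub_zero, abs_of_pos (by positivity)]; linarith)
  have h1 : tMin P z ≤ dotp z x := csInf_le hcomp.bddBelow ⟨x, interior_subset hx, rfl⟩
  have h2 : dotp z (x + (δ / 2) • z) ≤ tMax P z := le_csSup hcomp.bddAbove ⟨_, hmem, rfl⟩
  have h3 : dotp z (x + (δ / 2) • z) = dotp z x + (δ / 2) * dotp z z := by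
    simp only [← dotL_apply, map_add, map_smul, smul_eq_mul]
  have : 0 < (δ / 2) * dotp z z := by positivity
  linarith

/-- For a convex polytope `P ⊂ ℝ^d` with nonempty interior and `V₀`
vertices, the expected average vertex number of the two pieces of a uniform random cut
orthogonal to `z` equals `V₀/2 + A(P,z)`. -/
theorem expected_cut_vertices (d : ℕ) (P : Set (Fin d → ℝ)) (hP : IsPolytope P)
    (hint : (interior P).Nonempty) (z : Fin d → ℝ) (hz : z ≠ 0) :
    (tMax P z - tMin P z)⁻¹ *
      ∫ t in tMin P z..tMax P z,
        (((nVert (P ∩ {x | dotp z x ≤ t}) : ℝ) +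
          (nVert (P ∩ {x | t ≤ dotp z x}) : ℝ)) / 2) =
      (nVert P : ℝ) / 2 + avgVert P z := by
  classical
  obtain ⟨s, hs⟩ := hP
  have hconv : Convex ℝ P := hs ▸ convex_convexHull ℝ _
  have hcomp : IsCompact P := hs ▸ s.finite_toSet.isCompact_convexHull ℝ
  have hfin : (P.extremePoints ℝ).Finite :=
    s.finite_toSet.subset (hs ▸ extremePoints_convexHull_subset)
  obtain ⟨V, hVe⟩ : ∃ V : Finset (Fin d → ℝ), (V : Set (Fin d → ℝ)) = P.extremePoints ℝ :=
    ⟨hfin.toFinset, hfin.coe_toFinset⟩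
  have hV : P = convexHull ℝ (V : Set (Fin d → ℝ)) := by
    rw [← (V.finite_toSet.isCompact_convexHull ℝ).isClosed.closure_eq, hVe]
    exact (closure_convexHull_extremePoints hcomp hconv).symm
  have hVmem : ∀ v, v ∈ P.extremePoints ℝ ↔ v ∈ V := fun v => by rw [← hVe]; rfl
  have hlt := tMin_lt_tMax hcomp hint hz
  have hnV : nVert P = V.card := by
    unfold nVert; rw [← hVe, Set.ncard_coe_finset]
  -- the edges
  set Ed := (V ×ˢ V).filter (fun e => IsExtreme ℝ P (segment ℝ e.1 e.2)) with hEd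
  have hset : ∀ t : ℝ, {e : (Fin d → ℝ) × (Fin d → ℝ) | (e.1 ∈ V ∧ e.2 ∈ V) ∧
      IsExtreme ℝ P (segment ℝ e.1 e.2) ∧ dotL z e.1 < t ∧ t < dotL z e.2} =
      (Ed.filter (fun e => dotL z e.1 < t ∧ t < dotL z e.2) : Finset _) := by
    intro t
    ext e
    simp [hEd, and_assoc]
  let g : ℝ → ℝ := fun t => ∑ e ∈ Ed,
    Set.indicator (Set.Ioo (dotp z e.1) (dotp z e.2)) (fun _ => (1 : ℝ)) t
  have hg : ∀ a b : ℝ, IntervalIntegrable g MeasureTheory.volume a b := by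
    intro a b
    refine MeasureTheory.Integrable.intervalIntegrable ?_
    refine MeasureTheory.integrable_finsetSum _ fun e _ => ?_
    rw [MeasureTheory.integrable_indicator_iff measurableSet_Ioo]
    exact MeasureTheory.integrableOn_const (by simp)
  have hsecfin : ∀ t : ℝ, (∀ v ∈ V, dotp z v ≠ t) →
      ((P ∩ {x | dotp z x = t}).extremePoints ℝ).Finite := by
    intro t ht
    have := section_eq_image (dotL z) V hVe hV ht
    rw [hset] at this
    exact this ▸ (Finset.finite_toSet _).image _
  have hsec : ∀ t : ℝ, (∀ v ∈ V, dotp z v ≠ t) →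
      (nVert (P ∩ {x | dotp z x = t}) : ℝ) = g t := by
    intro t ht
    have h1 := section_eq_image (dotL z) V hVe hV ht
    have h2 := crossPt_injOn (t := t) (dotL z) V hVe
    have h3 : nVert (P ∩ {x | dotp z x = t}) =
        (Ed.filter (fun e => dotL z e.1 < t ∧ t < dotL z e.2)).card := by
      rw [← Set.ncard_coe_finset, ← hset, ← Set.ncard_image_of_injOn h2, ← h1]
      rfl
    rw [h3, Finset.card_filter, Nat.cast_sum]
    refine Finset.sum_congr rfl fun e _ => ?_
    by_cases h : dotL z e.1 < t ∧ t < dotL z e.2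
    · rw [if_pos h, Set.indicator_of_mem (show t ∈ Set.Ioo (dotp z e.1) (dotp z e.2) from h)]
      simp
    · rw [if_neg h, Set.indicator_of_notMem (show t ∉ Set.Ioo (dotp z e.1) (dotp z e.2) from h)]
      simp
  have hlow : ∀ (y : Fin d → ℝ) (t : ℝ), ((P ∩ {x | dotp y x = t}).extremePoints ℝ).Finite →
      nVert (P ∩ {x | dotp y x ≤ t}) =
        (V.filter (fun v => dotp y v < t)).card + nVert (P ∩ {x | dotp y x = t}) := by
    intro y t hf
    have h1 : (P ∩ {x | dotp y x ≤ t}).extremePoints ℝ =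
        {v | v ∈ P.extremePoints ℝ ∧ dotp y v < t} ∪ (P ∩ {x | dotp y x = t}).extremePoints ℝ :=
      ext_lower hconv (dotL y) t
    have h2 : {v | v ∈ P.extremePoints ℝ ∧ dotp y v < t} =
        ((V.filter (fun v => dotp y v < t) : Finset _) : Set (Fin d → ℝ)) := by
      ext v; simp [hVmem]
    unfold nVert
    rw [h1, h2, Set.ncard_union_eq _ (Finset.finite_toSet _) hf, Set.ncard_coe_finset]
    rw [← h2, Set.disjoint_left]
    rintro v ⟨-, hv⟩ hv'
    have : dotp y v = t := hv'.1.2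
    linarith
  have hneg : ∀ x, dotp (-z) x = - dotp z x := by intro x; simp [dotp]
  have hmain : ∀ t : ℝ, (∀ v ∈ V, dotp z v ≠ t) →
      ((nVert (P ∩ {x | dotp z x ≤ t}) : ℝ) + (nVert (P ∩ {x | t ≤ dotp z x}) : ℝ)) / 2 =
        (nVert P : ℝ) / 2 + g t := by
    intro t ht
    have e1 : {x | dotp (-z) x = -t} = {x | dotp z x = t} := by
      ext x; simp [hneg]
    have e2 : {x | dotp (-z) x ≤ -t} = {x | t ≤ dotp z x} := by
      ext x; simp [hneg]
    have a1 := hlow z t (hsecfin t ht)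
    have a2 := hlow (-z) (-t) (by rw [e1]; exact hsecfin t ht)
    rw [e1, e2] at a2
    have e3 : V.filter (fun v => dotp (-z) v < -t) = V.filter (fun v => ¬ dotp z v < t) := by
      refine Finset.filter_congr fun v hv => ?_
      rw [hneg, neg_lt_neg_iff, not_lt]
      exact ⟨le_of_lt, fun h => lt_of_le_of_ne h (ht v hv).symm⟩
    rw [e3] at a2
    have a3 := Finset.card_filter_add_card_filter_not (s := V) (fun v => dotp z v < t)
    rw [a1, a2, hnV, ← a3, ← hsec t ht]
    push_cast
    ring
  have hae : ∀ᵐ t : ℝ ∂MeasureTheory.volume, ∀ v ∈ V, dotp z v ≠ t := by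
    have hf : ((V.image (dotp z) : Finset ℝ) : Set ℝ).Finite := Finset.finite_toSet _
    have h0 := (MeasureTheory.measure_eq_zero_iff_ae_notMem).1 (hf.measure_zero MeasureTheory.volume)
    filter_upwards [h0] with t ht v hv h
    exact ht (by simpa using ⟨v, hv, h⟩)
  have hI1 : (∫ t in tMin P z..tMax P z, (((nVert (P ∩ {x | dotp z x ≤ t}) : ℝ) +
      (nVert (P ∩ {x | t ≤ dotp z x}) : ℝ)) / 2)) =
      ∫ t in tMin P z..tMax P z, ((nVert P : ℝ) / 2 + g t) :=
    intervalIntegral.integral_congr_ae (by filter_upwards [hae] with t ht _ using hmain t ht)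
  have hI2 : (∫ t in tMin P z..tMax P z, ((nVert (P ∩ {x | dotp z x = t}) : ℝ))) =
      ∫ t in tMin P z..tMax P z, g t :=
    intervalIntegral.integral_congr_ae (by filter_upwards [hae] with t ht _ using hsec t ht)
  unfold avgVert
  rw [hI1, hI2, intervalIntegral.integral_add intervalIntegrable_const (hg _ _),
    intervalIntegral.integral_const, smul_eq_mul, mul_add, ← mul_assoc,
    inv_mul_cancel₀ (sub_ne_zero.2 hlt.ne'), one_mul]
end
end

section
/- Let P ⊂ ℝ² be a convex polygon with nonempty interior and V₀ vertices, let z ∈ ℝ² be nonzero, and let t⁻ = min{z·x : x ∈ P}, t⁺ = max{z·x : x ∈ P}. Then (1/(t⁺−t⁻)) · ∫_{t⁻}^{t⁺} ( (number of vertices of P ∩ {x : z·x ≤ t}) + (number of vertices of P ∩ {x : z·x ≥ t}) )/2 dt = V₀/2 + 2. In particular this expected vertex number equals V₀ if and only if V₀ = 4. -/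
open scoped Pointwise BigOperators

noncomputable section

lemma aux_ext_cut {E : Type*} [AddCommGroup E] [Module ℝ E] (A : Set E) (hA : Convex ℝ A)
    (l : E →ₗ[ℝ] ℝ) (t : ℝ) :
    (A ∩ {x | l x ≤ t}).extremePoints ℝ =
      (A.extremePoints ℝ ∩ {x | l x < t}) ∪ (A ∩ {x | l x = t}).extremePoints ℝ := by
  have hex : IsExtreme ℝ (A ∩ {x | l x ≤ t}) (A ∩ {x | l x = t}) := by
    refine ⟨fun x hx => ⟨hx.1, le_of_eq hx.2⟩, ?_⟩
    rintro x ⟨hxA, hx⟩ y ⟨hyA, hy⟩ w ⟨hwA, hw⟩ ⟨a, b, ha, hb, hab, rfl⟩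
    refine ⟨hxA, ?_⟩
    simp only [Set.mem_ofPred_eq, map_add, map_smul, smul_eq_mul] at *
    have hb' : b = 1 - a := by linarith
    subst hb'
    nlinarith
  apply Set.Subset.antisymm
  · intro x hx
    have hxA := hx.1.1
    have hxt : l x ≤ t := hx.1.2
    rcases hxt.lt_or_eq with h | h
    · left
      refine ⟨⟨hxA, ?_⟩, h⟩
      rintro x1 h1 x2 h2 ⟨a, b, ha, hb, hab, hx12⟩
      set g := t - l x with hg
      have hg0 : 0 < g := by linarith
      set d1 := l x1 - l x with hd1
      set d2 := l x2 - l x with hd2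
      set δ := g / (g + |d1| + |d2|) with hδ
      have hD : 0 < g + |d1| + |d2| := by positivity
      have hδ0 : 0 < δ := by positivity
      have hδ1 : δ ≤ 1 := by
        rw [hδ, div_le_one hD]
        linarith [abs_nonneg d1, abs_nonneg d2]
      have hb1 : δ * d1 ≤ g := by
        rw [hδ, div_mul_eq_mul_div, div_le_iff₀ hD]
        nlinarith [abs_nonneg d1, abs_nonneg d2, le_abs_self d1]
      have hb2 : δ * d2 ≤ g := by
        rw [hδ, div_mul_eq_mul_div, div_le_iff₀ hD]
        nlinarith [abs_nonneg d1, abs_nonneg d2, le_abs_self d2]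
      have key : ∀ u ∈ A, δ * (l u - l x) ≤ g →
          x + δ • (u - x) ∈ A ∩ {x | l x ≤ t} := by
        intro u hu hb
        refine ⟨hA.add_smul_sub_mem hxA hu ⟨hδ0.le, hδ1⟩, ?_⟩
        simp only [Set.mem_ofPred_eq, map_add, map_smul, map_sub, smul_eq_mul]
        linarith
      have := hx.2 (key x1 h1 hb1) (key x2 h2 hb2) ⟨a, b, ha, hb, hab, by
        have : a • (x + δ • (x1 - x)) + b • (x + δ • (x2 - x))
          = (a + b) • x + δ • ((a • x1 + b • x2) - (a + b) • x) := by module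
        rw [this, hx12, hab]; simp⟩
      have h3 : δ • (x1 - x) = 0 := by simpa using this
      rcases smul_eq_zero.1 h3 with h4 | h4
      · exact absurd h4 hδ0.ne'
      · exact sub_eq_zero.1 h4
    · right
      rw [hex.extremePoints_eq]
      exact ⟨⟨hxA, h⟩, hx⟩
  · rintro x (⟨hx, hxt⟩ | hx)
    · exact inter_extremePoints_subset_extremePoints_of_subset Set.inter_subset_left
        ⟨⟨hx.1, (show l x < t from hxt).le⟩, hx⟩
    · exact hex.extremePoints_subset_extremePoints hx

lemma aux_ext_cut' {E : Type*} [AddCommGroup E] [Module ℝ E] (A : Set E) (hA : Convex ℝ A)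
    (l : E →ₗ[ℝ] ℝ) (t : ℝ) :
    (A ∩ {x | t ≤ l x}).extremePoints ℝ =
      (A.extremePoints ℝ ∩ {x | t < l x}) ∪ (A ∩ {x | l x = t}).extremePoints ℝ := by
  have := aux_ext_cut A hA (-l) (-t)
  simpa using this

lemma aux_ext_image {E F : Type*} [AddCommGroup E] [Module ℝ E] [AddCommGroup F] [Module ℝ F]
    (f : E →ᵃ[ℝ] F) (hf : Function.Injective f) (A : Set E) :
    (f '' A).extremePoints ℝ = f '' (A.extremePoints ℝ) := by
  ext y
  constructor
  · rintro ⟨⟨x, hx, rfl⟩, h⟩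
    refine ⟨x, ⟨hx, ?_⟩, rfl⟩
    intro x1 h1 x2 h2 hx12
    apply hf
    apply h ⟨x1, h1, rfl⟩ ⟨x2, h2, rfl⟩
    rw [← image_openSegment]
    exact ⟨x, hx12, rfl⟩
  · rintro ⟨x, ⟨hx, h⟩, rfl⟩
    refine ⟨⟨x, hx, rfl⟩, ?_⟩
    rintro _ ⟨x1, h1, rfl⟩ _ ⟨x2, h2, rfl⟩ hx12
    rw [← image_openSegment] at hx12
    obtain ⟨x', hx', he⟩ := hx12
    rw [hf he] at hx'
    rw [h h1 h2 hx']

/-- the functional -/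
def auxL (z : Fin 2 → ℝ) : (Fin 2 → ℝ) →ₗ[ℝ] ℝ where
  toFun := dotp z
  map_add' x y := by simp [dotp, Fin.sum_univ_two]; ring
  map_smul' c x := by simp [dotp, Fin.sum_univ_two]; ring

lemma auxL_apply (z x : Fin 2 → ℝ) : dotp z x = auxL z x := rfl

lemma aux_interior_section (P : Set (Fin 2 → ℝ)) (hconv : Convex ℝ P)
    (hint : (interior P).Nonempty) (l : (Fin 2 → ℝ) →ₗ[ℝ] ℝ) (t : ℝ)
    (a b : Fin 2 → ℝ) (ha : a ∈ P) (hb : b ∈ P) (hat : l a < t) (hbt : t < l b) :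
    ∃ q ∈ interior P, l q = t := by
  obtain ⟨p, hp⟩ := hint
  have key : ∀ y ∈ P, ∀ s : ℝ, 0 ≤ s → s < 1 → (1 - s) * l p + s * l y = t →
      ∃ q ∈ interior P, l q = t := by
    intro y hy s hs0 hs1 h
    refine ⟨(1 - s) • p + s • y,
      hconv.combo_interior_self_mem_interior hp hy (by linarith) hs0 (by ring), ?_⟩
    simpa using h
  rcases le_or_gt (l p) t with h | h
  · have hD : 0 < l b - l p := by linarith
    refine key b hb ((t - l p) / (l b - l p)) (div_nonneg (by linarith) hD.le)
      ((div_lt_one hD).2 (by linarith)) ?_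
    field_simp
    ring
  · have hD : 0 < l p - l a := by linarith
    refine key a ha ((l p - t) / (l p - l a)) (div_nonneg (by linarith) hD.le)
      ((div_lt_one hD).2 (by linarith)) ?_
    field_simp
    ring

lemma aux_push (P : Set (Fin 2 → ℝ)) (q w : Fin 2 → ℝ) (hq : q ∈ interior P) :
    ∃ ε : ℝ, 0 < ε ∧ q + ε • w ∈ P := by
  have hc : Filter.Tendsto (fun s : ℝ => q + s • w) (nhds 0) (nhds q) := by
    have : Continuous (fun s : ℝ => q + s • w) := by fun_prop
    simpa using this.tendsto 0
  have h1 : ∀ᶠ s in nhds (0 : ℝ), q + s • w ∈ P :=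
    hc.eventually (mem_interior_iff_mem_nhds.1 hq)
  have h2 : ∀ᶠ s in nhdsWithin (0 : ℝ) (Set.Ioi 0), q + s • w ∈ P :=
    h1.filter_mono nhdsWithin_le_nhds
  obtain ⟨s, hs, hs0⟩ := (h2.and self_mem_nhdsWithin).exists
  exact ⟨s, hs0, hs⟩

lemma aux_section_two (P : Set (Fin 2 → ℝ)) (hconv : Convex ℝ P) (hcomp : IsCompact P)
    (z : Fin 2 → ℝ) (hz : z ≠ 0) (t : ℝ) (q : Fin 2 → ℝ) (hq : q ∈ interior P)
    (hqt : dotp z q = t) :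
    ((P ∩ {x | dotp z x = t}).extremePoints ℝ).ncard = 2 := by
  set w : Fin 2 → ℝ := ![-(z 1), z 0] with hw
  have hzz : 0 < z 0 ^ 2 + z 1 ^ 2 := by
    by_contra hcon
    apply hz
    have h0 : z 0 = 0 := by nlinarith [sq_nonneg (z 0), sq_nonneg (z 1)]
    have h1 : z 1 = 0 := by nlinarith [sq_nonneg (z 0), sq_nonneg (z 1)]
    ext i
    fin_cases i <;> simp [h0, h1]
  have hw0 : w ≠ 0 := by
    intro h
    have h0 := congrFun h 0
    have h1 := congrFun h 1
    simp [hw] at h0 h1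
    simp [h0, h1] at hzz
  have hqw : q ≠ q + w := by simpa using hw0
  set f : ℝ →ᵃ[ℝ] (Fin 2 → ℝ) := AffineMap.lineMap q (q + w) with hf
  have hfs : ∀ s, f s = q + s • w := by
    intro s
    simp [hf, AffineMap.lineMap_apply, add_comm]
  have hinj : Function.Injective f := AffineMap.lineMap_injective ℝ hqw
  have hfcont : Continuous f := by
    have : (f : ℝ → (Fin 2 → ℝ)) = fun s => q + s • w := funext hfs
    rw [this]; fun_prop
  set T : Set ℝ := f ⁻¹' P with hT
  have hsec : P ∩ {x | dotp z x = t} = f '' T := by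
    ext x
    constructor
    · rintro ⟨hx, hxt⟩
      have hxe : f ((z 0 * (x 1 - q 1) - z 1 * (x 0 - q 0)) / (z 0 ^ 2 + z 1 ^ 2)) = x := by
        rw [hfs]
        simp only [Set.mem_ofPred_eq, dotp, Fin.sum_univ_two] at hxt hqt
        ext i
        fin_cases i
        · simp [hw]
          field_simp
          linear_combination (z 0) * (hqt - hxt)
        · simp [hw]
          field_simp
          linear_combination (z 1) * (hqt - hxt)
      exact ⟨_, by rw [hT, Set.mem_preimage, hxe]; exact hx, hxe⟩
    · rintro ⟨s, hs, rfl⟩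
      refine ⟨hs, ?_⟩
      rw [hfs]
      simp only [Set.mem_ofPred_eq, dotp, Fin.sum_univ_two] at hqt ⊢
      simp [hw]
      linear_combination hqt
  have hTconv : Convex ℝ T := hconv.affine_preimage f
  have hTclosed : IsClosed T := hcomp.isClosed.preimage hfcont
  have h0T : (0 : ℝ) ∈ T := by
    rw [hT, Set.mem_preimage, hfs]; simpa using interior_subset hq
  obtain ⟨ε, hε, hεP⟩ := aux_push P q w hq
  have hεT : ε ∈ T := by rw [hT, Set.mem_preimage, hfs]; exact hεP
  have hTcomp : IsCompact T :=
    Metric.isCompact_of_isClosed_isBounded hTclosed (by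
      obtain ⟨C, hC⟩ := hcomp.isBounded.exists_norm_le
      have hwn : 0 < ‖w‖ := norm_pos_iff.2 hw0
      refine isBounded_iff_forall_norm_le.2 ⟨(C + ‖q‖) / ‖w‖, fun s hs => ?_⟩
      rw [le_div_iff₀ hwn, ← norm_smul]
      have h1 : ‖f s‖ ≤ C := hC _ hs
      have h2 : s • w = f s - q := by rw [hfs]; simp
      rw [h2]
      exact (norm_sub_le _ _).trans (by linarith))
  have hTconn : IsConnected T := ⟨⟨0, h0T⟩, hTconv.isPreconnected⟩
  have hIcc := eq_Icc_of_connected_compact hTconn hTcomp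
  have hlt : sInf T < sSup T := by
    have h1 := csInf_le hTcomp.bddBelow h0T
    have h2 := le_csSup hTcomp.bddAbove hεT
    linarith
  rw [hsec, aux_ext_image f hinj, Set.ncard_image_of_injective _ hinj, hIcc,
    Set.extremePoints_Icc hlt.le, Set.ncard_pair hlt.ne]

lemma aux_integrand (P : Set (Fin 2 → ℝ)) (hconv : Convex ℝ P) (hcomp : IsCompact P)
    (hfin : (P.extremePoints ℝ).Finite)
    (hint : (interior P).Nonempty) (z : Fin 2 → ℝ) (hz : z ≠ 0) (t : ℝ)
    (ht1 : tMin P z < t) (ht2 : t < tMax P z) (ht : t ∉ dotp z '' (P.extremePoints ℝ)) :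
    ((nVert (P ∩ {x | dotp z x ≤ t}) : ℝ) + (nVert (P ∩ {x | t ≤ dotp z x}) : ℝ)) / 2
      = (nVert P : ℝ) / 2 + 2 := by
  have hne : (dotp z '' P).Nonempty := (hint.mono interior_subset).image _
  obtain ⟨_, ⟨a, ha, rfl⟩, hat⟩ := exists_lt_of_csInf_lt hne ht1
  obtain ⟨_, ⟨b, hb, rfl⟩, hbt⟩ := exists_lt_of_lt_csSup hne ht2
  obtain ⟨q, hq, hqt⟩ := aux_interior_section P hconv hint (auxL z) t a b ha hb hat hbt
  have h2 := aux_section_two P hconv hcomp z hz t q hq hqt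
  have hfin2 : ((P ∩ {x | dotp z x = t}).extremePoints ℝ).Finite :=
    Set.finite_of_ncard_pos (by omega)
  have e1 := aux_ext_cut P hconv (auxL z) t
  have e2 := aux_ext_cut' P hconv (auxL z) t
  simp only [← auxL_apply] at e1 e2
  have n1 : nVert (P ∩ {x | dotp z x ≤ t}) =
      (P.extremePoints ℝ ∩ {x | dotp z x < t}).ncard + 2 := by
    rw [nVert, e1, Set.ncard_union_eq _ (hfin.inter_of_left _) hfin2, h2]
    rw [Set.disjoint_left]
    rintro x ⟨-, hx⟩ hx'
    exact (ne_of_lt hx) hx'.1.2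
  have n2 : nVert (P ∩ {x | t ≤ dotp z x}) =
      (P.extremePoints ℝ ∩ {x | t < dotp z x}).ncard + 2 := by
    rw [nVert, e2, Set.ncard_union_eq _ (hfin.inter_of_left _) hfin2, h2]
    rw [Set.disjoint_left]
    rintro x ⟨-, hx⟩ hx'
    exact (ne_of_gt hx) hx'.1.2
  have n3 : nVert P = (P.extremePoints ℝ ∩ {x | dotp z x < t}).ncard +
      (P.extremePoints ℝ ∩ {x | t < dotp z x}).ncard := by
    rw [← Set.ncard_union_eq _ (hfin.inter_of_left _) (hfin.inter_of_left _), nVert]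
    · congr 1
      ext x
      constructor
      · intro hx
        have : dotp z x ≠ t := fun h => ht ⟨x, hx, h⟩
        rcases lt_or_gt_of_ne this with h | h
        · exact Or.inl ⟨hx, h⟩
        · exact Or.inr ⟨hx, h⟩
      · rintro (h | h) <;> exact h.1
    · rw [Set.disjoint_left]
      rintro x ⟨-, hx⟩ ⟨-, hx'⟩
      exact lt_asymm (show dotp z x < t from hx) (show t < dotp z x from hx')
  rw [n1, n2, n3]
  push_cast
  ring

/-- For a convex polygon `P ⊂ ℝ²` with nonempty interior and `V₀`
vertices, the expected average vertex number of the two pieces of a uniform random cut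
orthogonal to `z` equals `V₀/2 + 2`; in particular it equals `V₀` iff `V₀ = 4`. -/
theorem expected_cut_vertices_2D (P : Set (Fin 2 → ℝ)) (hP : IsPolytope P)
    (hint : (interior P).Nonempty) (z : Fin 2 → ℝ) (hz : z ≠ 0) :
    ((tMax P z - tMin P z)⁻¹ *
      ∫ t in tMin P z..tMax P z,
        (((nVert (P ∩ {x | dotp z x ≤ t}) : ℝ) +
          (nVert (P ∩ {x | t ≤ dotp z x}) : ℝ)) / 2) =
      (nVert P : ℝ) / 2 + 2) ∧
    ((tMax P z - tMin P z)⁻¹ *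
      ∫ t in tMin P z..tMax P z,
        (((nVert (P ∩ {x | dotp z x ≤ t}) : ℝ) +
          (nVert (P ∩ {x | t ≤ dotp z x}) : ℝ)) / 2) =
      (nVert P : ℝ) ↔ nVert P = 4) := by
  obtain ⟨s, hs⟩ := hP
  have hconv : Convex ℝ P := hs ▸ convex_convexHull ℝ _
  have hcomp : IsCompact P := hs ▸ s.finite_toSet.isCompact_convexHull ℝ
  have hfin : (P.extremePoints ℝ).Finite := by
    rw [hs]
    exact s.finite_toSet.subset extremePoints_convexHull_subset
  have hcont : Continuous (dotp z) := by
    unfold dotp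
    fun_prop
  have hic : IsCompact (dotp z '' P) := hcomp.image hcont
  have hlt : tMin P z < tMax P z := by
    obtain ⟨p, hp⟩ := hint
    obtain ⟨ε, hε, h⟩ := aux_push P p z hp
    have h1 : tMin P z ≤ dotp z p :=
      csInf_le hic.bddBelow ⟨p, interior_subset hp, rfl⟩
    have h2 : dotp z (p + ε • z) ≤ tMax P z := le_csSup hic.bddAbove ⟨_, h, rfl⟩
    have hzz : 0 < dotp z z := by
      simp only [dotp, Fin.sum_univ_two]
      by_contra hcon
      apply hz
      have h0 : z 0 = 0 := by nlinarith [mul_self_nonneg (z 0), mul_self_nonneg (z 1)]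
      have h1 : z 1 = 0 := by nlinarith [mul_self_nonneg (z 0), mul_self_nonneg (z 1)]
      ext i
      fin_cases i <;> simp [h0, h1]
    have h3 : dotp z (p + ε • z) = dotp z p + ε * dotp z z := by
      simp [auxL_apply]
    have := mul_pos hε hzz
    linarith
  have main : ∫ t in tMin P z..tMax P z,
        (((nVert (P ∩ {x | dotp z x ≤ t}) : ℝ) +
          (nVert (P ∩ {x | t ≤ dotp z x}) : ℝ)) / 2) =
      ∫ t in tMin P z..tMax P z, ((nVert P : ℝ) / 2 + 2) := by
    apply intervalIntegral.integral_congr_ae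
    have hF : (dotp z '' (P.extremePoints ℝ) ∪ {tMax P z}).Finite :=
      (hfin.image _).union (Set.finite_singleton _)
    have hae := (hF.countable).ae_notMem (MeasureTheory.volume : MeasureTheory.Measure ℝ)
    filter_upwards [hae] with t ht hmem
    rw [Set.uIoc_of_le hlt.le] at hmem
    refine aux_integrand P hconv hcomp hfin hint z hz t hmem.1
      (lt_of_le_of_ne hmem.2 fun h => ht (Or.inr h)) fun h => ht (Or.inl h)
  have hval : (tMax P z - tMin P z)⁻¹ *
      ∫ t in tMin P z..tMax P z,
        (((nVert (P ∩ {x | dotp z x ≤ t}) : ℝ) +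
          (nVert (P ∩ {x | t ≤ dotp z x}) : ℝ)) / 2) =
      (nVert P : ℝ) / 2 + 2 := by
    rw [main, intervalIntegral.integral_const, smul_eq_mul, inv_mul_cancel_left₀]
    linarith
  refine ⟨hval, ?_⟩
  rw [hval]
  constructor
  · intro h
    have : (nVert P : ℝ) = 4 := by linarith
    exact_mod_cast this
  · intro h
    rw [h]
    norm_num
end
end

section
/- Let P = x + [0,a] + [0,b] ⊂ ℝ² be a parallelogram, where a, b ∈ ℝ² are linearly independent, let z ∈ ℝ² be nonzero, and let t⁻ = min{z·y : y ∈ P}, t⁺ = max{z·y : y ∈ P}. Then (1/(t⁺−t⁻)) · ∫_{t⁻}^{t⁺} ( (number of vertices of P ∩ {y : z·y ≤ t}) + (number of vertices of P ∩ {y : z·y ≥ t}) )/2 dt = 4, i.e., a parallelogram is a critical polygon: the expected number of vertices of the two pieces of a uniform random cut orthogonal to any direction equals its number of vertices. -/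
open scoped Pointwise BigOperators

noncomputable section

lemma ext_image {E F : Type*} [AddCommGroup E] [Module ℝ E] [AddCommGroup F] [Module ℝ F]
    (g : E → F) (hi : Function.Injective g)
    (hg : ∀ x y : E, ∀ a b : ℝ, a + b = 1 → g (a • x + b • y) = a • g x + b • g y)
    (A : Set E) : Set.extremePoints ℝ (g '' A) = g '' Set.extremePoints ℝ A := by
  ext p
  simp only [mem_extremePoints_iff_left, Set.mem_image]
  constructor
  · rintro ⟨⟨q, hq, rfl⟩, h⟩
    refine ⟨q, ⟨hq, ?_⟩, rfl⟩
    rintro u hu v hv ⟨a, b, ha, hb, hab, rfl⟩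
    exact hi (h _ ⟨u, hu, rfl⟩ _ ⟨v, hv, rfl⟩ ⟨a, b, ha, hb, hab, (hg _ _ _ _ hab).symm⟩)
  · rintro ⟨q, ⟨hq, h⟩, rfl⟩
    refine ⟨⟨q, hq, rfl⟩, ?_⟩
    rintro _ ⟨u, hu, rfl⟩ _ ⟨v, hv, rfl⟩ ⟨a, b, ha, hb, hab, e⟩
    rw [← hg _ _ _ _ hab] at e
    rw [h u hu v hv ⟨a, b, ha, hb, hab, hi e⟩]

lemma ext_cut {E : Type*} [AddCommGroup E] [Module ℝ E] (A : Set E) (hA : Convex ℝ A)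
    (h : E → ℝ)
    (hh : ∀ x y : E, ∀ a b : ℝ, a + b = 1 → h (a • x + b • y) = a * h x + b * h y) (t : ℝ) :
    Set.extremePoints ℝ (A ∩ {y | h y ≤ t}) =
      (Set.extremePoints ℝ A ∩ {y | h y < t}) ∪ Set.extremePoints ℝ (A ∩ {y | h y = t}) := by
  ext p
  simp only [mem_extremePoints_iff_left, Set.mem_inter_iff, Set.mem_ofPred_eq, Set.mem_union]
  constructor
  · rintro ⟨⟨hp, hpt⟩, H⟩
    rcases hpt.lt_or_eq with hlt | heq
    · left
      refine ⟨⟨hp, ?_⟩, hlt⟩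
      rintro u hu v hv ⟨a, b, ha, hb, hab, rfl⟩
      set p := a • u + b • v with hpdef
      -- shrink towards p
      obtain ⟨ε, hε0, hε1, hεu, hεv⟩ : ∃ ε : ℝ, 0 < ε ∧ ε ≤ 1 ∧
          (1 - ε) * h p + ε * h u ≤ t ∧ (1 - ε) * h p + ε * h v ≤ t := by
        have hd : 0 < |h u - h p| + |h v - h p| + (t - h p) := by
          linarith [abs_nonneg (h u - h p), abs_nonneg (h v - h p)]
        refine ⟨(t - h p) / (|h u - h p| + |h v - h p| + (t - h p)), div_pos (by linarith) hd, ?_, ?_, ?_⟩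
        · rw [div_le_one hd]; linarith [abs_nonneg (h u - h p), abs_nonneg (h v - h p)]
        · have : (t - h p) / (|h u - h p| + |h v - h p| + (t - h p)) * (h u - h p) ≤ t - h p := by
            rw [div_mul_eq_mul_div, div_le_iff₀ hd]
            apply mul_le_mul_of_nonneg_left _ (by linarith)
            linarith [le_abs_self (h u - h p), abs_nonneg (h v - h p)]
          linarith
        · have : (t - h p) / (|h u - h p| + |h v - h p| + (t - h p)) * (h v - h p) ≤ t - h p := by
            rw [div_mul_eq_mul_div, div_le_iff₀ hd]
            apply mul_le_mul_of_nonneg_left _ (by linarith)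
            linarith [le_abs_self (h v - h p), abs_nonneg (h u - h p)]
          linarith
      have key := H ((1 - ε) • p + ε • u) ⟨hA hp hu (by linarith) hε0.le (by ring), by
          rw [hh _ _ _ _ (by ring)]; exact hεu⟩ ((1 - ε) • p + ε • v)
          ⟨hA hp hv (by linarith) hε0.le (by ring), by
          rw [hh _ _ _ _ (by ring)]; exact hεv⟩ ⟨a, b, ha, hb, hab, by
            have e1 : a • ((1 - ε) • p + ε • u) + b • ((1 - ε) • p + ε • v)
              = ((a + b) * (1 - ε)) • p + ε • (a • u + b • v) := by module
            rw [e1, hab, ← hpdef]; module⟩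
      have e2 : ε • (u - p) = 0 := by
        have : ε • (u - p) = ((1 - ε) • p + ε • u) - p := by module
        rw [this, key, sub_self]
      rcases smul_eq_zero.1 e2 with h0 | h0
      · exact absurd h0 hε0.ne'
      · exact sub_eq_zero.1 h0
    · right
      refine ⟨⟨hp, heq⟩, ?_⟩
      rintro u ⟨hu, hu'⟩ v ⟨hv, hv'⟩ hs
      exact H u ⟨hu, hu'.le⟩ v ⟨hv, hv'.le⟩ hs
  · rintro (⟨⟨hp, H⟩, hlt⟩ | ⟨⟨hp, heq⟩, H⟩)
    · exact ⟨⟨hp, hlt.le⟩, fun u hu v hv hs => H u hu.1 v hv.1 hs⟩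
    · refine ⟨⟨hp, heq.le⟩, ?_⟩
      rintro u ⟨hu, hu'⟩ v ⟨hv, hv'⟩ ⟨a, b, ha, hb, hab, rfl⟩
      rw [hh _ _ _ _ hab] at heq
      have h1 : a * h u ≤ a * t := mul_le_mul_of_nonneg_left hu' ha.le
      have h2 : b * h v ≤ b * t := mul_le_mul_of_nonneg_left hv' hb.le
      have h3 : a * t + b * t = t := by rw [← add_mul, hab, one_mul]
      have h4 : h u = t := mul_left_cancel₀ ha.ne' (by linarith)
      have h5 : h v = t := mul_left_cancel₀ hb.ne' (by linarith)
      exact H u ⟨hu, h4⟩ v ⟨hv, h5⟩ ⟨a, b, ha, hb, hab, rfl⟩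

/-- the unit square -/
def usq : Set (ℝ × ℝ) := Set.Icc (0 : ℝ) 1 ×ˢ Set.Icc (0 : ℝ) 1

lemma usq_convex : Convex ℝ usq := (convex_Icc 0 1).prod (convex_Icc 0 1)

lemma usq_compact : IsCompact usq := isCompact_Icc.prod isCompact_Icc

lemma usq_ext : Set.extremePoints ℝ usq = ({0, 1} : Set ℝ) ×ˢ ({0, 1} : Set ℝ) := by
  rw [usq, extremePoints_prod, Set.extremePoints_Icc zero_le_one]

lemma usq_ext_finite : (Set.extremePoints ℝ usq).Finite := by
  rw [usq_ext]; exact (Set.toFinite _).prod (Set.toFinite _)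

lemma usq_ext_card : (Set.extremePoints ℝ usq).ncard = 4 := by
  rw [usq_ext, Set.ncard_prod, Set.ncard_pair zero_ne_one]

/-- the affine functional -/
def hfun (c α β : ℝ) (s : ℝ × ℝ) : ℝ := c + α * s.1 + β * s.2

lemma hfun_aff (c α β : ℝ) (x y : ℝ × ℝ) (a b : ℝ) (hab : a + b = 1) :
    hfun c α β (a • x + b • y) = a * hfun c α β x + b * hfun c α β y := by
  simp only [hfun, Prod.fst_add, Prod.snd_add, Prod.smul_fst, Prod.smul_snd, smul_eq_mul]
  linear_combination (-c) * hab

lemma hfun_cont (c α β : ℝ) : Continuous (hfun c α β) := by unfold hfun; fun_prop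

lemma sec_two_pts (c α β t : ℝ) (hne : α ^ 2 + β ^ 2 ≠ 0)
    (hv : ∀ s ∈ Set.extremePoints ℝ usq, hfun c α β s ≠ t)
    (q : ℝ × ℝ) (hq : q ∈ usq ∩ {y | hfun c α β y = t}) :
    ∃ q' ∈ usq ∩ {y | hfun c α β y = t}, q' ≠ q := by
  obtain ⟨s, r⟩ := q
  obtain ⟨⟨⟨hs0, hs1⟩, ⟨hr0, hr1⟩⟩, ht⟩ := hq
  simp only [hfun, Set.mem_ofPred_eq] at ht hs0 hs1 hr0 hr1
  have hnv : ¬ ((s = 0 ∨ s = 1) ∧ (r = 0 ∨ r = 1)) := by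
    rintro ⟨h1, h2⟩
    refine hv (s, r) ?_ ht
    rw [usq_ext]
    exact ⟨h1, h2⟩
  -- it suffices to find a nonzero shift
  suffices ∃ δ : ℝ, δ ≠ 0 ∧ 0 ≤ s + δ * β ∧ s + δ * β ≤ 1 ∧ 0 ≤ r - δ * α ∧ r - δ * α ≤ 1 by
    obtain ⟨δ, hδ, h1, h2, h3, h4⟩ := this
    refine ⟨(s + δ * β, r - δ * α), ⟨⟨⟨h1, h2⟩, ⟨h3, h4⟩⟩, ?_⟩, ?_⟩
    · simp only [hfun, Set.mem_ofPred_eq]; linarith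
    · intro e
      rw [Prod.mk.injEq] at e
      have e1 : δ * β = 0 := by linarith [e.1]
      have e2 : δ * α = 0 := by linarith [e.2]
      have e1 := (mul_eq_zero.1 e1).resolve_left hδ
      have e2 := (mul_eq_zero.1 e2).resolve_left hδ
      exact hne (by rw [e1, e2]; ring)
  have aux : ∀ s r α β : ℝ, 0 < s → s < 1 → 0 ≤ r → r ≤ 1 →
      ∃ δ : ℝ, δ ≠ 0 ∧ 0 ≤ s + δ * β ∧ s + δ * β ≤ 1 ∧ 0 ≤ r - δ * α ∧ r - δ * α ≤ 1 := by
    intro s r α β hs0 hs1 hr0 hr1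
    obtain ⟨ε, hε, hb1, hb2, ha⟩ : ∃ ε : ℝ, 0 < ε ∧ ε * |β| ≤ s ∧ ε * |β| ≤ 1 - s ∧
        ε * |α| ≤ 1 / 2 := by
      have hD : 0 < |α| + |β| + 1 := by positivity
      have hm : 0 < min s (1 - s) := lt_min hs0 (by linarith)
      have hm1 : min s (1 - s) ≤ 1 / 2 := by
        rcases le_total s (1 / 2) with h | h
        · exact (min_le_left _ _).trans h
        · exact (min_le_right _ _).trans (by linarith)
      have hB : min s (1 - s) / (|α| + |β| + 1) * |β| ≤ min s (1 - s) := by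
        rw [div_mul_eq_mul_div, div_le_iff₀ hD]
        exact mul_le_mul_of_nonneg_left (by linarith [abs_nonneg α]) hm.le
      have hA : min s (1 - s) / (|α| + |β| + 1) * |α| ≤ min s (1 - s) := by
        rw [div_mul_eq_mul_div, div_le_iff₀ hD]
        exact mul_le_mul_of_nonneg_left (by linarith [abs_nonneg β]) hm.le
      exact ⟨_, div_pos hm hD, hB.trans (min_le_left _ _), hB.trans (min_le_right _ _),
        hA.trans hm1⟩
    have q1 : ε * β ≤ ε * |β| := mul_le_mul_of_nonneg_left (le_abs_self β) hε.le
    have q2 : ε * (-β) ≤ ε * |β| := mul_le_mul_of_nonneg_left (neg_le_abs β) hε.le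
    have q3 : ε * α ≤ ε * |α| := mul_le_mul_of_nonneg_left (le_abs_self α) hε.le
    have q4 : ε * (-α) ≤ ε * |α| := mul_le_mul_of_nonneg_left (neg_le_abs α) hε.le
    rcases le_total 0 α with hα | hα
    · have q5 : 0 ≤ ε * α := mul_nonneg hε.le hα
      rcases le_total r (1 / 2) with h | h
      · exact ⟨-ε, by linarith, by linarith, by linarith, by linarith, by linarith⟩
      · exact ⟨ε, by linarith, by linarith, by linarith, by linarith, by linarith⟩
    · have q5 : 0 ≤ ε * (-α) := mul_nonneg hε.le (by linarith)
      rcases le_total r (1 / 2) with h | h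
      · exact ⟨ε, by linarith, by linarith, by linarith, by linarith, by linarith⟩
      · exact ⟨-ε, by linarith, by linarith, by linarith, by linarith, by linarith⟩
  by_cases hs : s = 0 ∨ s = 1
  · have hr : ¬ (r = 0 ∨ r = 1) := fun h => hnv ⟨hs, h⟩
    push Not at hr
    obtain ⟨δ, hδ, h1, h2, h3, h4⟩ := aux r s β α (lt_of_le_of_ne hr0 hr.1.symm)
      (lt_of_le_of_ne hr1 hr.2) hs0 hs1
    exact ⟨-δ, neg_ne_zero.2 hδ, by linarith, by linarith, by linarith, by linarith⟩
  · push Not at hs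
    exact aux s r α β (lt_of_le_of_ne hs0 hs.1.symm) (lt_of_le_of_ne hs1 hs.2) hr0 hr1

lemma sec_card (c α β t : ℝ) (hne : α ^ 2 + β ^ 2 ≠ 0)
    (hv : ∀ s ∈ Set.extremePoints ℝ usq, hfun c α β s ≠ t)
    (q : ℝ × ℝ) (hq : q ∈ usq ∩ {y | hfun c α β y = t}) :
    (Set.extremePoints ℝ (usq ∩ {y | hfun c α β y = t})).ncard = 2 := by
  obtain ⟨q', hq', hqq⟩ := sec_two_pts c α β t hne hv q hq
  set K := usq ∩ {y | hfun c α β y = t} with hK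
  have hKcomp : IsCompact K :=
    usq_compact.inter_right (isClosed_eq (hfun_cont c α β) continuous_const)
  have hKconv : Convex ℝ K := by
    refine usq_convex.inter ?_
    intro u hu v hv a b ha hb hab
    simp only [Set.mem_ofPred_eq] at hu hv ⊢
    rw [hfun_aff _ _ _ _ _ _ _ hab, hu, hv, ← add_mul, hab, one_mul]
  let ℓ : ℝ × ℝ → ℝ := fun s => β * s.1 - α * s.2
  have hℓ : Continuous ℓ := by fun_prop
  let k : ℝ → ℝ × ℝ := fun r => ((α * (t - c) + β * r) / (α ^ 2 + β ^ 2),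
    (β * (t - c) - α * r) / (α ^ 2 + β ^ 2))
  have hk : ∀ r, ℓ (k r) = r := by
    intro r; simp only [ℓ, k]; field_simp; ring
  have hkinj : Function.Injective k := Function.LeftInverse.injective hk
  have hkaff : ∀ x y a b : ℝ, a + b = 1 → k (a • x + b • y) = a • k x + b • k y := by
    intro x y a b hab
    obtain rfl : b = 1 - a := by linarith
    ext <;> simp only [k, Prod.fst_add, Prod.snd_add, Prod.smul_fst, Prod.smul_snd, smul_eq_mul] <;>
      field_simp <;> ring
  have hkK : ∀ s ∈ K, k (ℓ s) = s := by
    rintro ⟨s, r⟩ ⟨-, hs⟩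
    simp only [hfun, Set.mem_ofPred_eq] at hs
    simp only [k, ℓ]
    rw [← hs]
    ext
    · simp only []; rw [div_eq_iff hne]; ring
    · simp only []; rw [div_eq_iff hne]; ring
  have hKim : k '' (ℓ '' K) = K := by
    rw [Set.image_image]
    ext p
    constructor
    · rintro ⟨s, hs, rfl⟩
      show k (ℓ s) ∈ K
      rwa [hkK s hs]
    · intro hp
      exact ⟨p, hp, hkK p hp⟩
  have hconn : IsConnected (ℓ '' K) :=
    ⟨⟨_, q, hq, rfl⟩, hKconv.isPreconnected.image _ hℓ.continuousOn⟩
  have hI := eq_Icc_of_connected_compact hconn (hKcomp.image hℓ)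
  have m1 : ℓ q ∈ ℓ '' K := ⟨q, hq, rfl⟩
  have m2 : ℓ q' ∈ ℓ '' K := ⟨q', hq', rfl⟩
  have hne' : ℓ q' ≠ ℓ q := by
    intro e
    exact hqq (by rw [← hkK q' hq', e, hkK q hq])
  rw [hI] at m1 m2
  have hlt : sInf (ℓ '' K) < sSup (ℓ '' K) := by
    rcases (m1.1.trans m1.2).lt_or_eq with h | h
    · exact h
    · exact absurd (by linarith [m1.1, m1.2, m2.1, m2.2]) hne'
  rw [← hKim, hI, ext_image k hkinj hkaff, Set.extremePoints_Icc hlt.le,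
    Set.ncard_image_of_injective _ hkinj, Set.ncard_pair hlt.ne]

lemma core (c α β t : ℝ) (hne : α ^ 2 + β ^ 2 ≠ 0)
    (hv : ∀ s ∈ Set.extremePoints ℝ usq, hfun c α β s ≠ t)
    (q : ℝ × ℝ) (hq : q ∈ usq ∩ {y | hfun c α β y = t}) :
    (Set.extremePoints ℝ (usq ∩ {y | hfun c α β y ≤ t})).ncard +
    (Set.extremePoints ℝ (usq ∩ {y | t ≤ hfun c α β y})).ncard = 8 := by
  have h2 := sec_card c α β t hne hv q hq
  have hfin : (Set.extremePoints ℝ (usq ∩ {y | hfun c α β y = t})).Finite :=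
    Set.finite_of_ncard_ne_zero (by rw [h2]; norm_num)
  have hup := ext_cut usq usq_convex (fun y => - hfun c α β y) (by
    intro x y a b hab
    rw [hfun_aff _ _ _ _ _ _ _ hab]; ring) (-t)
  simp only [neg_le_neg_iff, neg_lt_neg_iff, neg_inj] at hup
  rw [hup, ext_cut usq usq_convex _ (hfun_aff c α β) t]
  have hsub := extremePoints_subset (𝕜 := ℝ) (A := usq ∩ {y | hfun c α β y = t})
  rw [Set.ncard_union_eq _ (usq_ext_finite.inter_of_left _) hfin,
    Set.ncard_union_eq _ (usq_ext_finite.inter_of_left _) hfin, h2]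
  · have h4 := usq_ext_card
    have hsplit : Set.extremePoints ℝ usq = (Set.extremePoints ℝ usq ∩ {y | hfun c α β y < t}) ∪
        (Set.extremePoints ℝ usq ∩ {y | t < hfun c α β y}) := by
      ext p
      constructor
      · intro hp
        rcases lt_or_gt_of_ne (hv p hp) with h | h
        · exact Or.inl ⟨hp, h⟩
        · exact Or.inr ⟨hp, h⟩
      · rintro (h | h) <;> exact h.1
    rw [hsplit, Set.ncard_union_eq _ (usq_ext_finite.inter_of_left _)
      (usq_ext_finite.inter_of_left _)] at h4
    · omega
    · rw [Set.disjoint_left]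
      rintro p ⟨_, h⟩ ⟨_, h'⟩
      exact lt_asymm (show hfun c α β p < t from h) (show t < hfun c α β p from h')
  · rw [Set.disjoint_left]
    rintro p ⟨_, h⟩ h'
    exact (ne_of_gt h) (hsub h').2
  · rw [Set.disjoint_left]
    rintro p ⟨_, h⟩ h'
    exact (ne_of_lt h) (hsub h').2

lemma dotp_add' {d : ℕ} (z x y : Fin d → ℝ) : dotp z (x + y) = dotp z x + dotp z y := by
  simp [dotp, mul_add, Finset.sum_add_distrib]

lemma dotp_smul' {d : ℕ} (z x : Fin d → ℝ) (r : ℝ) : dotp z (r • x) = r * dotp z x := by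
  simp only [dotp, Pi.smul_apply, smul_eq_mul, Finset.mul_sum]
  exact Finset.sum_congr rfl fun i _ => by ring

/-- A parallelogram is a critical polygon: for every direction, the
expected number of vertices of the two pieces of a uniform random cut equals `4`, its
number of vertices. -/
theorem parallelogram_critical (a b x : Fin 2 → ℝ)
    (hab : LinearIndependent ℝ ![a, b])
    (P : Set (Fin 2 → ℝ))
    (hP : P = {x} + segment ℝ 0 a + segment ℝ 0 b)
    (z : Fin 2 → ℝ) (hz : z ≠ 0) :
    (tMax P z - tMin P z)⁻¹ *
      ∫ t in tMin P z..tMax P z,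
        (((nVert (P ∩ {y | dotp z y ≤ t}) : ℝ) +
          (nVert (P ∩ {y | t ≤ dotp z y}) : ℝ)) / 2) = 4 := by
  let g : ℝ × ℝ → (Fin 2 → ℝ) := fun s => x + s.1 • a + s.2 • b
  have hgP : P = g '' usq := by
    rw [hP]
    ext p
    simp only [segment_eq_image, Set.mem_add, Set.mem_image, Set.mem_singleton_iff, smul_zero,
      zero_add, g, usq, Set.mem_prod, Prod.exists]
    constructor
    · rintro ⟨_, ⟨_, rfl, _, ⟨s, hs, rfl⟩, rfl⟩, _, ⟨r, hr, rfl⟩, rfl⟩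
      exact ⟨s, r, ⟨hs, hr⟩, rfl⟩
    · rintro ⟨s, r, ⟨hs, hr⟩, rfl⟩
      exact ⟨_, ⟨_, rfl, _, ⟨s, hs, rfl⟩, rfl⟩, _, ⟨r, hr, rfl⟩, rfl⟩
  have hpair := LinearIndependent.pair_iff.1 hab
  have hginj : Function.Injective g := by
    rintro ⟨s, r⟩ ⟨s', r'⟩ e
    have : (s - s') • a + (r - r') • b = 0 := by
      have e' : x + s • a + r • b - (x + s' • a + r' • b) = 0 := sub_eq_zero.2 e
      rw [← e']; module
    obtain ⟨h1, h2⟩ := hpair _ _ this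
    ext
    · exact sub_eq_zero.1 h1
    · exact sub_eq_zero.1 h2
  have hgaff : ∀ u v : ℝ × ℝ, ∀ p q : ℝ, p + q = 1 → g (p • u + q • v) = p • g u + q • g v := by
    intro u v p q hpq
    obtain rfl : q = 1 - p := by linarith
    simp only [g, Prod.fst_add, Prod.snd_add, Prod.smul_fst, Prod.smul_snd, smul_eq_mul]
    module
  set c := dotp z x with hc
  set α := dotp z a with hα
  set β := dotp z b with hβ
  have hzg : ∀ s, dotp z (g s) = hfun c α β s := by
    intro s
    simp only [g, dotp_add', dotp_smul', hfun]
    ring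
  have hne : α ^ 2 + β ^ 2 ≠ 0 := by
    intro h0
    have hα0 : α = 0 := by nlinarith [sq_nonneg α, sq_nonneg β]
    have hβ0 : β = 0 := by nlinarith [sq_nonneg α, sq_nonneg β]
    simp only [hα, hβ, dotp, Fin.sum_univ_two] at hα0 hβ0
    have hdet : a 0 * b 1 - a 1 * b 0 ≠ 0 := by
      intro hd
      have k1 := hpair (b 1) (-(a 1)) (by
        ext i; fin_cases i <;> simp <;> linarith)
      have k2 := hpair (b 0) (-(a 0)) (by
        ext i; fin_cases i <;> simp <;> linarith)
      have hb : b = 0 := by ext i; fin_cases i; exacts [k2.1, k1.1]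
      have := hpair 0 1 (by simp [hb])
      exact one_ne_zero this.2
    apply hz
    ext i
    fin_cases i
    · have : z 0 * (a 0 * b 1 - a 1 * b 0) = 0 := by linear_combination b 1 * hα0 - a 1 * hβ0
      exact (mul_eq_zero.1 this).resolve_right hdet
    · have : z 1 * (a 0 * b 1 - a 1 * b 0) = 0 := by linear_combination a 0 * hβ0 - b 0 * hα0
      exact (mul_eq_zero.1 this).resolve_right hdet
  have himg : dotp z '' P = hfun c α β '' usq := by
    rw [hgP, Set.image_image]; simp only [hzg]
  have hcomp : IsCompact (hfun c α β '' usq) := usq_compact.image (hfun_cont c α β)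
  have hconn : (hfun c α β '' usq).OrdConnected :=
    (usq_convex.isPreconnected.image _ (hfun_cont c α β).continuousOn).ordConnected
  have i0 : hfun c α β (0, 0) ∈ hfun c α β '' usq := ⟨_, by simp [usq], rfl⟩
  have i1 : hfun c α β (1, 0) ∈ hfun c α β '' usq := ⟨_, by simp [usq], rfl⟩
  have i2 : hfun c α β (0, 1) ∈ hfun c α β '' usq := ⟨_, by simp [usq], rfl⟩
  have hmin : tMin P z = sInf (hfun c α β '' usq) := by rw [tMin, himg]
  have hmax : tMax P z = sSup (hfun c α β '' usq) := by rw [tMax, himg]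
  have l0 := csInf_le hcomp.bddBelow i0
  have l1 := csInf_le hcomp.bddBelow i1
  have l2 := csInf_le hcomp.bddBelow i2
  have u0 := le_csSup hcomp.bddAbove i0
  have u1 := le_csSup hcomp.bddAbove i1
  have u2 := le_csSup hcomp.bddAbove i2
  have hlt : tMin P z < tMax P z := by
    rw [hmin, hmax]
    by_contra hcon
    simp only [hfun] at l0 l1 l2 u0 u1 u2 hcon
    have hα0 : α = 0 := by linarith
    have hβ0 : β = 0 := by linarith
    exact hne (by rw [hα0, hβ0]; ring)
  have hnV : ∀ t : ℝ, t ∈ Set.Ioo (tMin P z) (tMax P z) →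
      t ∉ hfun c α β '' Set.extremePoints ℝ usq →
      (((nVert (P ∩ {y | dotp z y ≤ t}) : ℝ) +
          (nVert (P ∩ {y | t ≤ dotp z y}) : ℝ)) / 2) = 4 := by
    intro t ht htv
    rw [hmin, hmax] at ht
    obtain ⟨p, hp, hpt⟩ := exists_lt_of_csInf_lt ⟨_, i0⟩ ht.1
    obtain ⟨p', hp', hpt'⟩ := exists_lt_of_lt_csSup ⟨_, i0⟩ ht.2
    obtain ⟨q, hq, hqt⟩ := hconn.out hp hp' ⟨hpt.le, hpt'.le⟩
    have hcore := core c α β t hne (fun s hs e => htv ⟨s, hs, e⟩) q ⟨hq, hqt⟩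
    have s1 : P ∩ {y | dotp z y ≤ t} = g '' (usq ∩ {y | hfun c α β y ≤ t}) := by
      rw [hgP, ← Set.image_inter_preimage]
      simp only [Set.preimage_ofPred_eq, hzg]
    have s2 : P ∩ {y | t ≤ dotp z y} = g '' (usq ∩ {y | t ≤ hfun c α β y}) := by
      rw [hgP, ← Set.image_inter_preimage]
      simp only [Set.preimage_ofPred_eq, hzg]
    rw [s1, s2, nVert, nVert, ext_image g hginj hgaff, ext_image g hginj hgaff,
      Set.ncard_image_of_injective _ hginj, Set.ncard_image_of_injective _ hginj]
    have : ((Set.extremePoints ℝ (usq ∩ {y | hfun c α β y ≤ t})).ncard : ℝ) +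
      (Set.extremePoints ℝ (usq ∩ {y | t ≤ hfun c α β y})).ncard = 8 := by exact_mod_cast hcore
    linarith
  have hint : ∫ t in tMin P z..tMax P z,
        (((nVert (P ∩ {y | dotp z y ≤ t}) : ℝ) +
          (nVert (P ∩ {y | t ≤ dotp z y}) : ℝ)) / 2) = ∫ t in tMin P z..tMax P z, (4 : ℝ) := by
    apply intervalIntegral.integral_congr_ae
    have hfin : (insert (tMax P z) (hfun c α β '' Set.extremePoints ℝ usq)).Finite :=
      (usq_ext_finite.image _).insert _
    have hae := (hfin.measure_zero MeasureTheory.volume)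
    rw [← MeasureTheory.compl_mem_ae_iff] at hae
    filter_upwards [hae] with t ht htI
    rw [Set.uIoc_of_le hlt.le] at htI
    simp only [Set.mem_compl_iff, Set.mem_insert_iff, not_or] at ht
    exact hnV t ⟨htI.1, lt_of_le_of_ne htI.2 ht.1⟩ ht.2
  rw [hint, intervalIntegral.integral_const, smul_eq_mul, ← mul_assoc,
    inv_mul_cancel₀ (sub_pos.2 hlt).ne', one_mul]
end
end
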